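/- arXiv:2502.11615 — 2 statements merged into one kernel-verified Lean document; each statement's English description precedes it below -/
import Mathlib

section
/- The space X_{=n} of mm-isomorphism classes of metric measure spaces whose support has exactly n points, equipped with the box distance, has covering dimension (n+2)(n−1)/2. -/
open MeasureTheory

/-- `[n]²`: the set of 2-element subsets of `{0, …, n-1}`. -/
abbrev Pairs (n : ℕ) := {s : Finset (Fin n) // s.card = 2}

/-- The 2-element subset `{i, j}` for `i ≠ j`. -/
def pairOf {n : ℕ} (i j : Fin n) (h : i ≠ j) : Pairs n :=
  ⟨{i, j}, Finset.card_pair h⟩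

/-- `R_n ⊆ (0,∞)^{[n]²}`. -/
def RnSet (n : ℕ) : Set (Pairs n → ℝ) :=
  {r | (∀ e, 0 < r e) ∧
    ∀ (i j k : Fin n) (hij : i ≠ j) (hjk : j ≠ k) (hik : i ≠ k),
      r (pairOf i k hik) ≤ r (pairOf i j hij) + r (pairOf j k hjk)}

/-- The open `(n-1)`-simplex: strictly positive weights summing to `1`. -/
def SimplexSet (n : ℕ) : Set (Fin n → ℝ) :=
  {s | (∀ i, 0 < s i) ∧ ∑ i, s i = 1}

/-- The distance function `d_r` on `{0, …, n-1}` induced by `r`. -/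
noncomputable def drDist {n : ℕ} (r : Pairs n → ℝ) (i j : Fin n) : ℝ :=
  if h : i = j then 0 else r (pairOf i j h)

/-- The probability measure `μ_s` on `{0, …, n-1}` with weights `s`. -/
noncomputable def muS {n : ℕ} (s : Fin n → ℝ) : Measure (Fin n) :=
  ∑ i : Fin n, ENNReal.ofReal (s i) • Measure.dirac i

/-- The distortion of a relation `S`, with respect to distance functions `dX`, `dY`. -/
noncomputable def disF {X Y : Type*} (dX : X → X → ℝ) (dY : Y → Y → ℝ)
    (S : Set (X × Y)) : ℝ :=
  sSup {v | ∃ p ∈ S, ∃ q ∈ S, v = |dX p.1 q.1 - dY p.2 q.2|}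

/-- The box distance between metric measure spaces given by distance functions and
measures (every subset of a finite space being closed). -/
noncomputable def boxDistF {X Y : Type*} [MeasurableSpace X] [MeasurableSpace Y]
    (dX : X → X → ℝ) (dY : Y → Y → ℝ) (μ : Measure X) (ν : Measure Y) : ℝ :=
  sInf {v | ∃ π : Measure (X × Y), π.map Prod.fst = μ ∧ π.map Prod.snd = ν ∧
    ∃ S : Set (X × Y), v = max (1 - (π S).toReal) (disF dX dY S)}

/-- Parameters `(r, s)` for an `n`-point metric measure space. -/
def MMparam (n : ℕ) : Set ((Pairs n → ℝ) × (Fin n → ℝ)) :=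
  RnSet n ×ˢ SimplexSet n

/-- The box (pseudo)distance between the metric measure spaces corresponding to two
parameters. -/
noncomputable def boxD {n : ℕ} (p q : (Pairs n → ℝ) × (Fin n → ℝ)) : ℝ :=
  boxDistF (drDist p.1) (drDist q.1) (muS p.2) (muS q.2)

/-- `X_{=n}`: the parameter space of `n`-point metric measure spaces with the topology of
the box distance (generated by the open balls of the box distance). -/
noncomputable def boxTop (n : ℕ) : TopologicalSpace ↥(MMparam n) :=
  TopologicalSpace.generateFrom
    {B | ∃ (x : ↥(MMparam n)) (ε : ℝ), 0 < ε ∧ B = {y : ↥(MMparam n) | boxD x.1 y.1 < ε}}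

/-- The covering dimension of `X` is at most `n`. -/
def CovDimLE (X : Type*) [TopologicalSpace X] (n : ℕ) : Prop :=
  ∀ U : Set (Set X), (∀ u ∈ U, IsOpen u) → ⋃₀ U = Set.univ →
    ∃ V : Set (Set X), (∀ v ∈ V, IsOpen v) ∧ ⋃₀ V = Set.univ ∧
      (∀ v ∈ V, ∃ u ∈ U, v ⊆ u) ∧ ∀ x : X, {v ∈ V | x ∈ v}.encard ≤ (n : ℕ∞) + 1

/-- The covering dimension of a topological space. -/
noncomputable def covDim (X : Type*) [TopologicalSpace X] : ℕ∞ :=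
  sInf {m : ℕ∞ | ∃ k : ℕ, m = (k : ℕ∞) ∧ CovDimLE X k}

/-! The box topology is induced from the space of orbits of the parameters `(r, s)` under
relabelling: between `n`-point spaces, a correspondence which realises a small box distance must be
the graph of a bijection. So the dimension is that of this orbit space.

For the upper bound, `(r, s)` has `N = n (n - 1) / 2 + n` coordinates, and an open cover of the
orbit space is refined by a locally finite family of boxes with corners in `(ℚ + √2) ^ N`. The
number of coordinates of a point lying on faces of these boxes or of their relabellings is at most
`N - 1`, because the weights sum to `1` and so are not all in `ℚ + √2`. Stratifying by this number
and thickening the strata gives a refinement of order `N`.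

For the lower bound, a cube of dimension `N - 1` embeds in the orbit space as a set of parameters
with strictly increasing weights, and Lebesgue's covering theorem bounds its dimension. The latter
is deduced from Sperner's lemma, proved by counting parities of facets in the Kuhn triangulation. -/

/-! ### Covering dimension -/

section CoveringDimension

variable {X Y : Type*} [TopologicalSpace X] [TopologicalSpace Y] {k : ℕ}

theorem CovDimLE.exists_indexed_refinement (h : CovDimLE X k) {ι : Type*} (U : ι → Set X)
    (hU : ∀ i, IsOpen (U i)) (hcover : ⋃ i, U i = Set.univ) :
    ∃ V : ι → Set X, (∀ i, IsOpen (V i)) ∧ ⋃ i, V i = Set.univ ∧ (∀ i, V i ⊆ U i) ∧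
      ∀ x, {i | x ∈ V i}.encard ≤ k + 1 := by
  obtain ⟨V, hVo, hVcover, hVU, hVcard⟩ :=
    h (Set.range U) (Set.forall_mem_range.2 hU) (by rwa [Set.sUnion_range])
  have hVι : ∀ v : V, ∃ i, v.1 ⊆ U i := fun v ↦ by simpa using hVU v v.2
  choose φ hφ using hVι
  refine ⟨fun i ↦ ⋃ v : {v : V // φ v = i}, v.1.1, fun i ↦ isOpen_iUnion fun v ↦ hVo _ v.1.2,
    Set.eq_univ_of_forall fun x ↦ ?_,
    fun i ↦ Set.iUnion_subset fun v ↦ (hφ v.1).trans_eq (by rw [v.2]), fun x ↦ ?_⟩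
  · obtain ⟨v, hv, hx⟩ := Set.sUnion_eq_univ_iff.1 hVcover x
    exact Set.mem_iUnion.2 ⟨φ ⟨v, hv⟩, Set.mem_iUnion.2 ⟨⟨⟨v, hv⟩, rfl⟩, hx⟩⟩
  · calc {i | x ∈ ⋃ v : {v : V // φ v = i}, v.1.1}.encard
        ≤ (φ '' {v | x ∈ v.1}).encard := by
          refine Set.encard_le_encard fun i hi ↦ ?_
          obtain ⟨v, hv⟩ := Set.mem_iUnion.1 hi
          exact ⟨v.1, hv, v.2⟩
      _ ≤ {v : V | x ∈ v.1}.encard := Set.encard_image_le _ _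
      _ ≤ {v ∈ V | x ∈ v}.encard := by
          rw [← Subtype.val_injective.encard_image]
          exact Set.encard_le_encard (Set.image_subset_iff.2 fun v hv ↦ ⟨v.2, hv⟩)
      _ ≤ k + 1 := hVcard x

theorem covDimLE_of_exists_indexed_refinement
    (h : ∀ U : Set (Set X), (∀ u ∈ U, IsOpen u) → ⋃₀ U = Set.univ →
      ∃ (ι : Type _) (V : ι → Set X), (∀ i, IsOpen (V i)) ∧ ⋃ i, V i = Set.univ ∧
        (∀ i, ∃ u ∈ U, V i ⊆ u) ∧ ∀ x, {i | x ∈ V i}.encard ≤ k + 1) :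
    CovDimLE X k := by
  intro U hU hcover
  obtain ⟨ι, V, hVo, hVcover, hVU, hVcard⟩ := h U hU hcover
  refine ⟨Set.range V, Set.forall_mem_range.2 hVo, by rwa [Set.sUnion_range],
    Set.forall_mem_range.2 hVU, fun x ↦ ?_⟩
  calc {v ∈ Set.range V | x ∈ v}.encard
      ≤ (V '' {i | x ∈ V i}).encard :=
        Set.encard_le_encard (by rintro _ ⟨⟨i, rfl⟩, hx⟩; exact ⟨i, hx, rfl⟩)
    _ ≤ {i | x ∈ V i}.encard := Set.encard_image_le _ _
    _ ≤ k + 1 := hVcard x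

theorem CovDimLE.of_isInducing (h : CovDimLE Y k) {f : X → Y} (hf : Topology.IsInducing f)
    (hclosed : IsClosed (Set.range f)) : CovDimLE X k := by
  refine covDimLE_of_exists_indexed_refinement fun U hU hcover ↦ ?_
  choose u huo hu using fun i : U ↦ hf.isOpen_iff.1 (hU i i.2)
  obtain ⟨V, hVo, hVcover, hVu, hVcard⟩ :=
    h.exists_indexed_refinement (fun i : Option U ↦ i.elim (Set.range f)ᶜ u)
      (Option.forall.2 ⟨hclosed.isOpen_compl, huo⟩) <| Set.eq_univ_of_forall fun y ↦ by
        by_cases hy : y ∈ Set.range f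
        · obtain ⟨x, rfl⟩ := hy
          obtain ⟨i, hi, hx⟩ := Set.sUnion_eq_univ_iff.1 hcover x
          exact Set.mem_iUnion.2 ⟨some ⟨i, hi⟩, (hu ⟨i, hi⟩).superset hx⟩
        · exact Set.mem_iUnion.2 ⟨none, hy⟩
  refine ⟨U, fun i ↦ f ⁻¹' V (some i), fun i ↦ (hVo _).preimage hf.continuous,
    Set.eq_univ_of_forall fun x ↦ ?_, fun i ↦ ⟨i, i.2, ?_⟩, fun x ↦ ?_⟩
  · obtain ⟨_ | i, hi⟩ := Set.iUnion_eq_univ_iff.1 hVcover (f x)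
    · exact absurd (Set.mem_range_self x) (hVu none hi)
    · exact Set.mem_iUnion.2 ⟨i, hi⟩
  · exact (Set.preimage_mono (hVu (some i))).trans_eq (hu i)
  · rw [← (Option.some_injective U).encard_image]
    exact (Set.encard_le_encard (Set.image_subset_iff.2 fun i hi ↦ hi)).trans (hVcard (f x))

theorem CovDimLE.of_isInducing_of_surjective (h : CovDimLE X k) {f : X → Y}
    (hf : Topology.IsInducing f) (hsurj : f.Surjective) : CovDimLE Y k := by
  refine covDimLE_of_exists_indexed_refinement fun U hU hcover ↦ ?_
  obtain ⟨V, hVo, hVcover, hVU, hVcard⟩ :=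
    h.exists_indexed_refinement (fun u : U ↦ f ⁻¹' u) (fun u ↦ (hU u u.2).preimage hf.continuous)
      (by rw [← Set.preimage_iUnion, ← Set.sUnion_eq_iUnion, hcover, Set.preimage_univ])
  choose W hWo hWV using fun u ↦ hf.isOpen_iff.1 (hVo u)
  refine ⟨U, W, hWo, Set.eq_univ_of_forall (hsurj.forall.2 fun x ↦ ?_), fun u ↦ ⟨u, u.2, ?_⟩,
    hsurj.forall.2 fun x ↦ ?_⟩
  · rw [Set.mem_iUnion]
    simpa only [← Set.mem_preimage, hWV] using Set.iUnion_eq_univ_iff.1 hVcover x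
  · rw [← hsurj.preimage_subset_preimage_iff, hWV]
    exact hVU u
  · simpa only [← Set.mem_preimage, hWV] using hVcard x

theorem covDim_eq_of_isInducing_of_surjective {f : X → Y} (hf : Topology.IsInducing f)
    (hsurj : f.Surjective) : covDim X = covDim Y := by
  have hiff (k : ℕ) : CovDimLE X k ↔ CovDimLE Y k :=
    ⟨fun h ↦ h.of_isInducing_of_surjective hf hsurj,
      fun h ↦ h.of_isInducing hf (hsurj.range_eq ▸ isClosed_univ)⟩
  simp only [covDim, hiff]

theorem covDim_eq (h : CovDimLE X k) (hmin : ∀ l, CovDimLE X l → k ≤ l) :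
    covDim X = k :=
  le_antisymm (sInf_le ⟨k, rfl, h⟩) <| le_sInf <| by
    rintro _ ⟨l, rfl, hl⟩
    exact_mod_cast hmin l hl

end CoveringDimension

/-! ### Sperner's lemma on a grid and Lebesgue's covering theorem -/

section Sperner

variable {n : ℕ}

/-- The number, modulo 2, of ways to match the vertices of a facet with the labels `1, …, n`, where
vertex `a` has label `c a ∈ {0, …, n}`. A facet counts (parity `1`) when it carries each of these
labels exactly once. Written as a determinant, Laplace expansion relates it to whole simplices. -/
def facetParity (c : Fin n → Fin (n + 1)) : ZMod 2 :=
  Matrix.det fun k a ↦ if c a = k.succ then 1 else 0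

theorem facetParity_eq_zero {c : Fin n → Fin (n + 1)} (k : Fin n) (hk : ∀ a, c a ≠ k.succ) :
    facetParity c = 0 :=
  Matrix.det_eq_zero_of_row_eq_zero k fun a ↦ if_neg (hk a)

theorem facetParity_succ : facetParity (Fin.succ : Fin n → Fin (n + 1)) = 1 := by
  rw [facetParity, ← Matrix.det_one (n := Fin n)]
  congr 1
  ext k a
  simp [Matrix.one_apply, eq_comm]

theorem sum_facetParity_succAbove (c : Fin (n + 1) → Fin (n + 1)) :
    ∑ i : Fin (n + 1), facetParity (c ∘ i.succAbove) =
      Matrix.det fun k i ↦ if c i = k then (1 : ZMod 2) else 0 := by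
  set M : Matrix (Fin (n + 1)) (Fin (n + 1)) (ZMod 2) := fun k i ↦ if c i = k then 1 else 0
  -- Adding all rows to row `0` makes it constantly `1`, since column `i` has its `1` in row `c i`.
  have hdet : M.det = (M.updateRow 0 fun _ ↦ 1).det := by
    have hrows : ∑ k, (1 : ZMod 2) • M k = fun _ ↦ 1 := by ext i; simp [M]
    rw [← hrows, Matrix.det_updateRow_sum, one_smul]
  rw [hdet, Matrix.det_succ_row_zero]
  refine Finset.sum_congr rfl fun i _ ↦ ?_
  have hsign : (-1 : ZMod 2) = 1 := CharTwo.neg_eq 1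
  rw [hsign, one_pow, one_mul, Matrix.updateRow_self, one_mul]
  rfl

theorem surjective_of_sum_facetParity_ne_zero {c : Fin (n + 1) → Fin (n + 1)}
    (hc : ∑ i : Fin (n + 1), facetParity (c ∘ i.succAbove) ≠ 0) : c.Surjective := by
  intro k
  by_contra! hk
  rw [sum_facetParity_succAbove] at hc
  exact hc (Matrix.det_eq_zero_of_row_eq_zero k fun i ↦ if_neg (hk i))

/-- Vertex number `k` of the simplex of the Kuhn triangulation of `ℕ ^ n` which starts at `x` and
moves one step in the coordinate directions `τ⁻¹ 0, τ⁻¹ 1, …` in turn. -/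
def kuhnVertex (x : Fin n → ℕ) (τ : Equiv.Perm (Fin n)) (k : ℕ) : Fin n → ℕ :=
  fun j ↦ x j + if (τ j : ℕ) < k then 1 else 0

theorem le_kuhnVertex (x : Fin n → ℕ) (τ : Equiv.Perm (Fin n)) (k : ℕ) : x ≤ kuhnVertex x τ k :=
  fun _ ↦ Nat.le_add_right _ _

theorem kuhnVertex_le (x : Fin n → ℕ) (τ : Equiv.Perm (Fin n)) (k : ℕ) (j : Fin n) :
    kuhnVertex x τ k j ≤ x j + 1 := by
  unfold kuhnVertex
  split_ifs <;> omega

theorem kuhnVertex_monotone (x : Fin n → ℕ) (τ : Equiv.Perm (Fin n)) :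
    Monotone (kuhnVertex x τ) := by
  intro a b hab j
  dsimp only [kuhnVertex]
  split_ifs <;> omega

theorem kuhnVertex_swap_mul (x : Fin n → ℕ) (τ : Equiv.Perm (Fin n)) {p q : Fin n}
    (hpq : (q : ℕ) = p + 1) {k : ℕ} (hk : k ≠ q) :
    kuhnVertex x (Equiv.swap p q * τ) k = kuhnVertex x τ k := by
  have hlt (i : Fin n) : (Equiv.swap p q i : ℕ) < k ↔ (i : ℕ) < k := by
    rcases eq_or_ne i p with rfl | hp
    · rw [Equiv.swap_apply_left]; omega
    rcases eq_or_ne i q with rfl | hq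
    · rw [Equiv.swap_apply_right]; omega
    · rw [Equiv.swap_apply_of_ne_of_ne hp hq]
  ext j
  simp only [kuhnVertex, Equiv.Perm.mul_apply, hlt]

/-- An inner facet of the cell `x + [0, 1] ^ n` lies in exactly two simplices, exchanged by a
transposition, so their contributions cancel. -/
theorem sum_perm_facetParity_eq_zero (L : (Fin n → ℕ) → Fin (n + 1)) (x : Fin n → ℕ)
    {i : Fin (n + 1)} (h0 : i ≠ 0) (hlast : i ≠ Fin.last n) :
    ∑ τ : Equiv.Perm (Fin n), facetParity (fun a ↦ L (kuhnVertex x τ (i.succAbove a))) = 0 := by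
  have hi0 : (i : ℕ) ≠ 0 := Fin.val_ne_iff.2 h0
  have hin : (i : ℕ) ≠ n := Fin.val_ne_iff.2 hlast
  let p : Fin n := ⟨i - 1, by omega⟩
  let q : Fin n := ⟨i, by omega⟩
  have hpq : (q : ℕ) = p + 1 := (Nat.succ_pred hi0).symm
  have hswap (τ : Equiv.Perm (Fin n)) (a : Fin n) :
      kuhnVertex x (Equiv.swap p q * τ) (i.succAbove a) = kuhnVertex x τ (i.succAbove a) :=
    kuhnVertex_swap_mul x τ hpq (Fin.val_ne_iff.2 (i.succAbove_ne a))
  refine Finset.sum_involution (fun τ _ ↦ Equiv.swap p q * τ) (fun τ _ ↦ ?_) (fun τ _ _ h ↦ ?_)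
    (fun _ _ ↦ Finset.mem_univ _) fun τ _ ↦ Equiv.swap_mul_self_mul p q τ
  · simp only [hswap, CharTwo.add_self_eq_zero]
  · have : p = q := Equiv.swap_eq_one_iff.1 (mul_eq_right.1 h)
    omega

theorem kuhnVertex_add_single (x : Fin (n + 1) → ℕ) (τ : Equiv.Perm (Fin (n + 1)))
    (a : Fin (n + 1)) :
    kuhnVertex (x + Pi.single (τ⁻¹ 0) 1) ((finRotate (n + 1))⁻¹ * τ) a =
      kuhnVertex x τ (a + 1) := by
  obtain ⟨σ, rfl⟩ : ∃ σ, τ = finRotate (n + 1) * σ := ⟨(finRotate (n + 1))⁻¹ * τ, by simp⟩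
  ext j
  rw [inv_mul_cancel_left]
  rcases eq_or_ne (σ j) (Fin.last n) with hj | hj
  · have : (finRotate (n + 1) * σ)⁻¹ 0 = j := by
      rw [Equiv.Perm.inv_eq_iff_eq, Equiv.Perm.mul_apply, hj, finRotate_last]
    simp only [kuhnVertex, Pi.add_apply, this, Pi.single_eq_same, Equiv.Perm.mul_apply, hj,
      finRotate_last, Fin.val_last, Fin.val_zero, Nat.succ_pos, if_true, a.is_le.not_gt, if_false,
      add_zero]
  · have hrot := coe_finRotate_of_ne_last hj
    have : (finRotate (n + 1) * σ)⁻¹ 0 ≠ j := by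
      rw [Ne, Equiv.Perm.inv_eq_iff_eq, Equiv.Perm.mul_apply, ← Fin.val_inj, hrot]
      simp
    simp only [kuhnVertex, Pi.add_apply, Pi.single_eq_of_ne this.symm, Equiv.Perm.mul_apply, hrot,
      add_lt_add_iff_right, add_zero]

theorem sum_Iic_add_single {ι M : Type*} [Fintype ι] [DecidableEq ι] [AddCommMonoid M]
    (m : ι → ℕ) (j : ι) (g : (ι → ℕ) → M) :
    ∑ x ∈ Finset.Iic m, g (x + Pi.single j 1) + ∑ x ∈ Finset.Iic m with x j = 0, g x =
      ∑ x ∈ Finset.Iic m, g x + ∑ x ∈ Finset.Iic m with x j = m j, g (x + Pi.single j 1) := by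
  have hshift : ∑ x ∈ Finset.Iic m with x j ≠ m j, g (x + Pi.single j 1) =
      ∑ x ∈ Finset.Iic m with x j ≠ 0, g x := by
    refine Finset.sum_nbij' (· + Pi.single j 1) (· - Pi.single j 1) ?_ ?_ ?_ ?_ fun _ _ ↦ rfl
    · intro x hx
      simp only [Finset.mem_filter, Finset.mem_Iic] at hx ⊢
      refine ⟨fun i ↦ ?_, by simp⟩
      have : x i ≤ m i := hx.1 i
      rcases eq_or_ne i j with rfl | hij
      · simp only [Pi.add_apply, Pi.single_eq_same]; omega
      · simpa [hij]
    · intro x hx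
      simp only [Finset.mem_filter, Finset.mem_Iic] at hx ⊢
      have : x j ≤ m j := hx.1 j
      refine ⟨tsub_le_self.trans hx.1, ?_⟩
      simp only [Pi.sub_apply, Pi.single_eq_same]
      omega
    · exact fun x _ ↦ add_tsub_cancel_right x _
    · intro x hx
      have hxj : 1 ≤ x j := Nat.one_le_iff_ne_zero.2 (Finset.mem_filter.1 hx).2
      exact tsub_add_cancel_of_le (update_le_iff.2 ⟨hxj, fun _ _ ↦ Nat.zero_le _⟩)
  rw [← Finset.sum_filter_add_sum_filter_not _ (fun x ↦ x j = m j), hshift,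
    ← Finset.sum_filter_add_sum_filter_not (Finset.Iic m) (fun x ↦ x j = 0) g]
  abel

/-- The label of a grid point outside the box `[0, m] ^ n`: one more than its last coordinate
exceeding `m`. Points of the box get `0`. -/
noncomputable def overflowLabel (m : ℕ) (x : Fin n → ℕ) : Fin (n + 1) :=
  (Finset.univ.filter (m < x ·)).sup Fin.succ

theorem overflowLabel_mono (m : ℕ) : Monotone (overflowLabel m : (Fin n → ℕ) → Fin (n + 1)) :=
  fun _ _ hxy ↦ Finset.sup_mono <|
    Finset.monotone_filter_right _ fun j _ hj ↦ lt_of_lt_of_le hj (hxy j)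

theorem overflowLabel_eq_succ_iff {m : ℕ} {x : Fin n → ℕ} {k : Fin n} :
    overflowLabel m x = k.succ ↔ m < x k ∧ ∀ j, m < x j → j ≤ k := by
  have hle : overflowLabel m x ≤ k.succ ↔ ∀ j, m < x j → j ≤ k := by
    simp [overflowLabel, Finset.sup_le_iff]
  refine ⟨fun h ↦ ⟨?_, hle.1 h.le⟩, fun ⟨hk, h⟩ ↦ (hle.2 h).antisymm ?_⟩
  · have hne : (Finset.univ.filter (m < x ·)).Nonempty := by
      by_contra! hempty
      rw [overflowLabel, hempty, Finset.sup_empty] at h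
      exact Fin.succ_ne_zero k h.symm
    obtain ⟨j, hj, hsup⟩ := Finset.exists_mem_eq_sup _ hne Fin.succ
    rw [overflowLabel, hsup, Fin.succ_inj] at h
    exact h ▸ (Finset.mem_filter.1 hj).2
  · exact Finset.le_sup (f := Fin.succ) (Finset.mem_filter.2 ⟨Finset.mem_univ k, hk⟩)

/-- The extension of a labelling of the box `[0, m] ^ n` to the whole grid by `overflowLabel`. -/
noncomputable def extendLabel (m : ℕ) (l : (Fin n → ℕ) → Fin (n + 1)) (x : Fin n → ℕ) :
    Fin (n + 1) :=
  if ∀ j, x j ≤ m then l x else overflowLabel m x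

theorem extendLabel_of_lt {m : ℕ} {l : (Fin n → ℕ) → Fin (n + 1)} {x : Fin n → ℕ} {j : Fin n}
    (hj : m < x j) : extendLabel m l x = overflowLabel m x :=
  if_neg fun h ↦ (h j).not_gt hj

theorem extendLabel_ne_succ {m : ℕ} {l : (Fin n → ℕ) → Fin (n + 1)} {x : Fin n → ℕ} {k : Fin n}
    (hl : (∀ j, x j ≤ m) → l x ≠ k.succ) (hk : x k ≤ m) : extendLabel m l x ≠ k.succ := by
  unfold extendLabel
  split_ifs with h
  · exact hl h
  · exact fun hlabel ↦ (overflowLabel_eq_succ_iff.1 hlabel).1.not_ge hk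

theorem le_of_extendLabel_eq_zero {m : ℕ} {l : (Fin n → ℕ) → Fin (n + 1)} {x : Fin n → ℕ}
    (h : extendLabel m l x = 0) (j : Fin n) : x j ≤ m := by
  by_contra! hj
  have hsucc : j.succ ≤ overflowLabel m x :=
    Finset.le_sup (f := Fin.succ) (Finset.mem_filter.2 ⟨Finset.mem_univ j, hj⟩)
  rw [← extendLabel_of_lt (l := l) hj, h] at hsucc
  exact Fin.succ_ne_zero j (le_bot_iff.1 hsucc)

theorem eq_succ_of_monotone {c : Fin n → Fin (n + 1)} (hc : Monotone c)
    (hsucc : ∀ k : Fin n, ∃ a, c a = k.succ) : c = Fin.succ := by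
  choose g hg using hsucc
  have hmono : StrictMono g := fun i j hij ↦ by
    by_contra! h
    have := hc h
    rw [hg, hg, Fin.succ_le_succ_iff] at this
    exact this.not_gt hij
  have hid : g = id := funext fun k ↦ hmono.apply_le.antisymm hmono.le_apply
  exact funext fun k ↦ by simpa only [hid, id] using hg k

/-- On the upper boundary of the box the extended labels are overflow labels, and these are
`1, …, n` in some order on exactly one facet. -/
theorem facetParity_overflowLabel {m : ℕ} {x : Fin (n + 1) → ℕ} (hx : ∀ j, x j ≤ m)
    (τ : Equiv.Perm (Fin (n + 1))) :
    facetParity (fun a : Fin (n + 1) ↦ overflowLabel m (kuhnVertex x τ (a + 1))) =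
      if x = (fun _ ↦ m) ∧ τ = 1 then 1 else 0 := by
  split_ifs with h
  · obtain ⟨rfl, rfl⟩ := h
    convert facetParity_succ (n := n + 1) with a
    refine overflowLabel_eq_succ_iff.2 ⟨by simp [kuhnVertex], fun j hj ↦ ?_⟩
    by_contra! hja
    have : ¬ (j : ℕ) < a + 1 := by omega
    simp [kuhnVertex, this] at hj
  · by_contra hne
    have hsucc : ∀ k : Fin (n + 1), ∃ a : Fin (n + 1),
        overflowLabel m (kuhnVertex x τ (a + 1)) = k.succ := fun k ↦ by
      by_contra! hk
      exact hne (facetParity_eq_zero k hk)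
    have hmono : Monotone fun a : Fin (n + 1) ↦ overflowLabel m (kuhnVertex x τ (a + 1)) :=
      fun a b hab ↦ overflowLabel_mono m (kuhnVertex_monotone x τ (by simpa using hab))
    have hlabel (k : Fin (n + 1)) : m < kuhnVertex x τ (k + 1) k ∧
        ∀ j, m < kuhnVertex x τ (k + 1) j → j ≤ k :=
      overflowLabel_eq_succ_iff.1 (congrFun (eq_succ_of_monotone hmono hsucc) k)
    have hk (k : Fin (n + 1)) : x k = m ∧ τ k ≤ k := by
      have := (hlabel k).1
      have : x k ≤ m := hx k
      unfold kuhnVertex at *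
      split_ifs at * <;> omega
    refine h ⟨funext fun k ↦ (hk k).1, Equiv.ext fun k ↦ (hk k).2.antisymm ?_⟩
    refine (hlabel (τ k)).2 k ?_
    simp [kuhnVertex, (hk k).1]

/-- The parity of the facet of a Kuhn simplex opposite to its first vertex. -/
def frontParity (L : (Fin (n + 1) → ℕ) → Fin (n + 2)) (x : Fin (n + 1) → ℕ)
    (τ : Equiv.Perm (Fin (n + 1))) : ZMod 2 :=
  facetParity fun a ↦ L (kuhnVertex x τ (a + 1))

/-- The parity of the facet of a Kuhn simplex opposite to its last vertex. -/
def backParity (L : (Fin (n + 1) → ℕ) → Fin (n + 2)) (x : Fin (n + 1) → ℕ)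
    (τ : Equiv.Perm (Fin (n + 1))) : ZMod 2 :=
  facetParity fun a ↦ L (kuhnVertex x τ a)

theorem sum_perm_sum_facetParity (L : (Fin (n + 1) → ℕ) → Fin (n + 2)) (x : Fin (n + 1) → ℕ) :
    ∑ τ, ∑ i : Fin (n + 2),
        facetParity ((fun k : Fin (n + 2) ↦ L (kuhnVertex x τ k)) ∘ i.succAbove) =
      ∑ τ, frontParity L x τ + ∑ τ, backParity L x τ := by
  have hinner : ∑ i : Fin n, ∑ τ : Equiv.Perm (Fin (n + 1)),
      facetParity (fun a ↦ L (kuhnVertex x τ (i.castSucc.succ.succAbove a))) = 0 :=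
    Finset.sum_eq_zero fun i _ ↦ sum_perm_facetParity_eq_zero L x (Fin.succ_ne_zero _)
      (by simp [Fin.ext_iff, i.is_lt.ne])
  simp only [Function.comp_def]
  rw [Finset.sum_comm, Fin.sum_univ_succ, Fin.sum_univ_castSucc, hinner, zero_add]
  simp [frontParity, backParity]

/-- The front facet of a Kuhn simplex is the back facet of another one, translated by a coordinate
vector, so the sum over the front facets telescopes. -/
theorem sum_frontParity {L : (Fin (n + 1) → ℕ) → Fin (n + 2)}
    (hL : ∀ x k, x k = 0 → L x ≠ k.succ) (m : ℕ) :
    ∑ x ∈ Finset.Iic fun _ ↦ m, ∑ τ, frontParity L x τ =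
      ∑ x ∈ Finset.Iic fun _ ↦ m, ∑ τ, backParity L x τ +
        ∑ τ, ∑ x ∈ Finset.Iic (fun _ ↦ m) with x (τ⁻¹ 0) = m, frontParity L x τ := by
  let ρ := finRotate (n + 1)
  have hfront (x τ) : frontParity L x τ = backParity L (x + Pi.single (τ⁻¹ 0) 1) (ρ⁻¹ * τ) := by
    simp only [frontParity, backParity, ρ, kuhnVertex_add_single]
  have hback (x) : ∑ τ, backParity L x τ = ∑ τ, backParity L x (ρ⁻¹ * τ) :=
    (Equiv.sum_comp (Equiv.mulLeft ρ⁻¹) (backParity L x)).symm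
  have hzero (τ x) (hx : x (τ⁻¹ 0) = 0) : backParity L x (ρ⁻¹ * τ) = 0 := by
    refine facetParity_eq_zero (τ⁻¹ 0) fun a ↦ hL _ _ ?_
    have hlast : (ρ⁻¹ * τ) (τ⁻¹ 0) = Fin.last n := by
      rw [Equiv.Perm.mul_apply, Equiv.Perm.inv_eq_iff_eq, finRotate_last]
      exact τ.apply_symm_apply 0
    simp only [kuhnVertex, hlast, hx, Fin.val_last, a.is_le.not_gt, if_false]
  simp only [hfront, hback]
  rw [Finset.sum_comm, Finset.sum_comm (s := Finset.Iic fun _ ↦ m), ← Finset.sum_add_distrib]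
  refine Finset.sum_congr rfl fun τ _ ↦ ?_
  rw [← sum_Iic_add_single _ _ (backParity L · (ρ⁻¹ * τ)),
    Finset.sum_eq_zero (s := Finset.filter _ _), add_zero]
  exact fun x hx ↦ hzero τ x (Finset.mem_filter.1 hx).2

theorem sum_boundary_frontParity {L : (Fin (n + 1) → ℕ) → Fin (n + 2)} {m : ℕ}
    (hL : ∀ x k, m < x k → L x = overflowLabel m x) :
    ∑ τ, ∑ x ∈ Finset.Iic (fun _ ↦ m) with x (τ⁻¹ 0) = m, frontParity L x τ = 1 := by
  have hparity (τ : Equiv.Perm (Fin (n + 1))) (x) (hx : x ∈ Finset.Iic fun _ ↦ m)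
      (hxτ : x (τ⁻¹ 0) = m) :
      frontParity L x τ = if x = (fun _ ↦ m) ∧ τ = 1 then 1 else 0 := by
    rw [← facetParity_overflowLabel (Finset.mem_Iic.1 hx), frontParity]
    congr 1
    ext1 a
    exact hL _ (τ⁻¹ 0) (by rw [kuhnVertex, hxτ]; simp)
  rw [Finset.sum_eq_single 1, Finset.sum_eq_single fun _ ↦ m, hparity 1 _ (by simp) rfl]
  · simp
  · intro x hx hne
    rw [Finset.mem_filter] at hx
    rw [hparity _ _ hx.1 hx.2, if_neg fun h ↦ hne h.1]
  · simp
  · intro τ _ hne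
    refine Finset.sum_eq_zero fun x hx ↦ ?_
    rw [Finset.mem_filter] at hx
    rw [hparity _ _ hx.1 hx.2, if_neg fun h ↦ hne h.2]
  · simp

theorem exists_rainbow_kuhnSimplex {L : (Fin (n + 1) → ℕ) → Fin (n + 2)} {m : ℕ}
    (hzero : ∀ x k, x k = 0 → L x ≠ k.succ) (hm : ∀ x k, m < x k → L x = overflowLabel m x) :
    ∃ x τ, Function.Surjective fun k : Fin (n + 2) ↦ L (kuhnVertex x τ k) := by
  have hsum : ∑ x ∈ Finset.Iic fun _ ↦ m, ∑ τ, ∑ i : Fin (n + 2),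
      facetParity ((fun k : Fin (n + 2) ↦ L (kuhnVertex x τ k)) ∘ i.succAbove) = 1 := by
    simp only [sum_perm_sum_facetParity, Finset.sum_add_distrib]
    rw [sum_frontParity hzero, sum_boundary_frontParity hm, add_right_comm,
      CharTwo.add_self_eq_zero, zero_add]
  obtain ⟨x, -, hx⟩ := Finset.exists_ne_zero_of_sum_ne_zero (hsum.trans_ne one_ne_zero)
  obtain ⟨τ, -, hτ⟩ := Finset.exists_ne_zero_of_sum_ne_zero hx
  exact ⟨x, τ, surjective_of_sum_facetParity_ne_zero hτ⟩

/-- Sperner's lemma for the cubical grid `[0, m] ^ (n + 1)`. -/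
theorem exists_rainbow_cell (m : ℕ) (l : (Fin (n + 1) → ℕ) → Fin (n + 2))
    (hzero : ∀ x, (∀ j, x j ≤ m) → ∀ k, x k = 0 → l x ≠ k.succ)
    (hm : ∀ x, (∀ j, x j ≤ m) → ∀ k, x k = m → l x ≠ 0) :
    ∃ v : Fin (n + 2) → Fin (n + 1) → ℕ, (∀ i j, v i j ≤ m) ∧
      (∀ i i' j, v i j ≤ v i' j + 1) ∧ ∀ i, l (v i) = i := by
  obtain ⟨x, τ, hsurj⟩ := exists_rainbow_kuhnSimplex (L := extendLabel m l)
    (fun x k hx ↦ extendLabel_ne_succ (fun hxm ↦ hzero x hxm k hx) (by simp [hx]))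
    (fun x k ↦ extendLabel_of_lt)
  choose f hf using hsurj
  -- The vertex with label `0` lies in the box but not on its upper faces, so the cell is inside.
  have hzero_le : ∀ j, kuhnVertex x τ (f 0) j ≤ m := le_of_extendLabel_eq_zero (hf 0)
  have hx (j) : x j + 1 ≤ m := by
    have hlabel : l (kuhnVertex x τ (f 0)) = 0 := (if_pos hzero_le).symm.trans (hf 0)
    exact Nat.succ_le_iff.2 <| (le_kuhnVertex x τ (f 0) j).trans_lt <|
      (hzero_le j).lt_of_ne fun h ↦ hm _ hzero_le j h hlabel
  have hle (i j) : kuhnVertex x τ (f i) j ≤ m := (kuhnVertex_le x τ _ j).trans (hx j)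
  exact ⟨fun i ↦ kuhnVertex x τ (f i), hle,
    fun i i' j ↦ (kuhnVertex_le x τ _ j).trans (Nat.succ_le_succ (le_kuhnVertex x τ _ j)),
    fun i ↦ (if_pos (hle i)).symm.trans (hf i)⟩

end Sperner

section LebesgueCovering

open unitInterval

/-- The cubical form of the Knaster–Kuratowski–Mazurkiewicz lemma. -/
theorem exists_forall_mem_of_isOpen_cover {n : ℕ} {W : Fin (n + 2) → Set (Fin (n + 1) → I)}
    (hW : ∀ k, IsOpen (W k)) (hcover : ∀ x, ∃ k, x ∈ W k)
    (hzero : ∀ x k, x k = 0 → x ∉ W k.succ) (hone : ∀ x k, x k = 1 → x ∉ W 0) :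
    ∃ x, ∀ k, x ∈ W k := by
  obtain ⟨δ, hδ, hball⟩ := lebesgue_number_lemma_of_metric (isCompact_univ (X := Fin (n + 1) → I))
    hW fun x _ ↦ Set.mem_iUnion.2 (hcover x)
  obtain ⟨m, hm⟩ := exists_nat_one_div_lt hδ
  let pt (y : Fin (n + 1) → ℕ) : Fin (n + 1) → I :=
    fun j ↦ Set.projIcc 0 1 zero_le_one (y j / (m + 1) : ℝ)
  choose l hl using fun y ↦ hball (pt y) (Set.mem_univ _)
  have hself (y) : pt y ∈ W (l y) := hl y (Metric.mem_ball_self hδ)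
  obtain ⟨v, -, hclose, hlabel⟩ := exists_rainbow_cell (m + 1) l
    (fun y _ k hy h ↦ hzero (pt y) k (by simp [pt, hy]) (h ▸ hself y))
    (fun y _ k hy h ↦ hone (pt y) k
      (by simp [pt, hy, div_self (Nat.cast_add_one_ne_zero m : (m + 1 : ℝ) ≠ 0)]) (h ▸ hself y))
  refine ⟨pt (v 0), fun k ↦ ?_⟩
  have hdist : dist (pt (v 0)) (pt (v k)) ≤ 1 / (m + 1) := by
    refine (dist_pi_le_iff (by positivity)).2 fun j ↦ ?_
    refine ((LipschitzWith.projIcc zero_le_one).dist_le_mul _ _).trans ?_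
    have h1 : (v 0 j : ℝ) ≤ v k j + 1 := by exact_mod_cast hclose 0 k j
    have h2 : (v k j : ℝ) ≤ v 0 j + 1 := by exact_mod_cast hclose k 0 j
    rw [NNReal.coe_one, one_mul, Real.dist_eq, ← sub_div, abs_div,
      abs_of_pos (by positivity : (0 : ℝ) < m + 1)]
    gcongr
    exact abs_sub_le_iff.2 ⟨by linarith, by linarith⟩
  have := hl (v k) (Metric.mem_ball.2 (hdist.trans_lt hm))
  rwa [hlabel] at this

theorem succ_le_of_covDimLE_cube {n k : ℕ} (h : CovDimLE (Fin (n + 1) → I) k) : n + 1 ≤ k := by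
  let U : Fin (n + 2) → Set (Fin (n + 1) → I) :=
    Fin.cases {x | ∀ j, x j ≠ 1} fun j ↦ {x | x j ≠ 0}
  have hU : ∀ i, IsOpen (U i) := Fin.cases
    (by simpa only [U, Fin.cases_zero, Set.ofPred_forall] using
      isOpen_iInter_of_finite fun j ↦ isOpen_ne_fun (continuous_apply j) continuous_const)
    fun j ↦ isOpen_ne_fun (continuous_apply j) continuous_const
  have hcover : ⋃ i, U i = Set.univ := Set.eq_univ_of_forall fun x ↦ by
    by_cases hx : ∃ j, x j ≠ 0
    · obtain ⟨j, hj⟩ := hx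
      exact Set.mem_iUnion.2 ⟨j.succ, hj⟩
    · push Not at hx
      refine Set.mem_iUnion.2 ⟨0, fun j ↦ ?_⟩
      simp [hx j]
  obtain ⟨W, hWo, hWcover, hWU, hWcard⟩ := h.exists_indexed_refinement U hU hcover
  obtain ⟨x, hx⟩ := exists_forall_mem_of_isOpen_cover hWo (Set.iUnion_eq_univ_iff.1 hWcover)
    (fun x k hx hxW ↦ hWU k.succ hxW hx) (fun x k hx hxW ↦ hWU 0 hxW k hx)
  have hcard := hWcard x
  simp only [hx, Set.ofPred_true, Set.encard_univ, ENat.card_eq_coe_fintype_card,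
    Fintype.card_fin] at hcard
  norm_cast at hcard
  omega

theorem CovDimLE.card_le_of_cube {κ : Type*} [Fintype κ] {k : ℕ} (h : CovDimLE (κ → I) k) :
    Fintype.card κ ≤ k := by
  rcases hn : Fintype.card κ with _ | n
  · exact Nat.zero_le k
  · let e : (Fin (n + 1) → I) ≃ₜ (κ → I) :=
      Homeomorph.piCongrLeft (Y := fun _ ↦ I) (Fintype.equivFinOfCardEq hn).symm
    exact succ_le_of_covDimLE_cube (h.of_isInducing e.isInducing (by simp))

end LebesgueCovering

/-! ### Dimension of quotients by finite groups -/

section Stratification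

open Topology Metric

variable {X : Type*} [TopologicalSpace X] [TopologicalSpace.MetrizableSpace X] {d : ℕ}

/-- A cover indexed by the sets of points with given rank and type. Within one rank, where the type
is locally constant, these sets have disjoint neighbourhoods, so only the `d + 1` ranks count. -/
theorem covDimLE_of_exists_stratification
    (h : ∀ U : Set (Set X), (∀ u ∈ U, IsOpen u) → ⋃₀ U = Set.univ →
      ∃ (κ : Type _) (rank : X → Fin (d + 1)) (type : X → κ),
        (∀ x, ∀ᶠ y in 𝓝 x, rank y = rank x → type y = type x) ∧
          ∀ x, ∃ u ∈ U, ∀ y, rank y = rank x → type y = type x → y ∈ u) :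
    CovDimLE X d := by
  let _ := TopologicalSpace.metrizableSpaceMetric X
  refine covDimLE_of_exists_indexed_refinement fun U hU hcover ↦ ?_
  obtain ⟨κ, rank, type, hlocal, hsmall⟩ := h U hU hcover
  choose u huU hu using hsmall
  let P (x : X) : Set X := {y | rank y = rank x ∧ type y = type x}
  let R (x : X) : Set X := {y | rank y = rank x ∧ type y ≠ type x}
  let N (x : X) : Set X := {y | infEDist y (P x) < infEDist y (R x)}
  have hN (x : X) : IsOpen (N x) := isOpen_lt continuous_infEDist continuous_infEDist
  have hxN (x : X) : x ∈ N x := by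
    have hR : x ∉ closure (R x) := by
      simpa [R, mem_closure_iff_frequently, Filter.not_frequently] using hlocal x
    have hP : infEDist x (P x) = 0 := infEDist_zero_of_mem ⟨rfl, rfl⟩
    exact hP.trans_lt (infEDist_pos_iff_notMem_closure.2 hR)
  have hsubset {x y : X} (hrank : rank x = rank y) (hne : type x ≠ type y) : P x ⊆ R y :=
    fun z hz ↦ ⟨hz.1.trans hrank, hz.2.trans_ne hne⟩
  have htype {x y z : X} (hx : z ∈ N x) (hy : z ∈ N y) (hrank : rank x = rank y) :
      type x = type y := by
    by_contra hne
    refine lt_irrefl (infEDist z (P x)) ?_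
    calc infEDist z (P x) < infEDist z (R x) := hx
      _ ≤ infEDist z (P y) := infEDist_anti (hsubset hrank.symm (Ne.symm hne))
      _ < infEDist z (R y) := hy
      _ ≤ infEDist z (P x) := infEDist_anti (hsubset hrank hne)
  choose rep hrep using fun p : Set.range fun x ↦ (rank x, type x) ↦ p.2
  refine ⟨_, fun p ↦ N (rep p) ∩ u (rep p), fun p ↦ (hN _).inter (hU _ (huU _)),
    Set.eq_univ_of_forall fun x ↦ ?_, fun p ↦ ⟨_, huU _, Set.inter_subset_right⟩, fun x ↦ ?_⟩
  · obtain ⟨hrank, htype⟩ := Prod.mk.inj (hrep ⟨_, x, rfl⟩)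
    refine Set.mem_iUnion.2 ⟨⟨_, x, rfl⟩, ?_, hu _ x hrank.symm htype.symm⟩
    simpa only [N, P, R, hrank, htype] using hxN x
  · have hinj : Set.InjOn (fun p ↦ rank (rep p)) {p | x ∈ N (rep p) ∩ u (rep p)} :=
      fun p hp q hq hpq ↦ Subtype.ext <| by
        rw [← hrep p, ← hrep q]
        exact Prod.ext hpq (htype hp.1 hq.1 hpq)
    calc {p | x ∈ N (rep p) ∩ u (rep p)}.encard
        = ((fun p ↦ rank (rep p)) '' {p | x ∈ N (rep p) ∩ u (rep p)}).encard :=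
          hinj.encard_image.symm
      _ ≤ ENat.card (Fin (d + 1)) := Set.encard_le_card
      _ = d + 1 := by simp

end Stratification

section Boxes

open Topology

variable {ι β : Type*}

/-- The coordinates of `v` lying on a face of some box `[(B b).1, (B b).2]` which contains `v`. -/
def wallCoords (B : β → (ι → ℝ) × (ι → ℝ)) (v : ι → ℝ) : Set ι :=
  {i | ∃ b, v ∈ Set.Icc (B b).1 (B b).2 ∧ (v i = (B b).1 i ∨ v i = (B b).2 i)}

theorem ncard_wallCoords_lt_card [Fintype ι] {B : β → (ι → ℝ) × (ι → ℝ)} {A : Set ℝ}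
    (hB : ∀ b i, (B b).1 i ∈ A ∧ (B b).2 i ∈ A) {v : ι → ℝ} {i : ι} (hi : v i ∉ A) :
    (wallCoords B v).ncard < Fintype.card ι := by
  rw [← Nat.card_eq_fintype_card]
  refine Set.ncard_lt_card (Set.ne_univ_iff_exists_notMem _ |>.2 ⟨i, ?_⟩)
  rintro ⟨b, -, h | h⟩
  · exact hi (h ▸ (hB b i).1)
  · exact hi (h ▸ (hB b i).2)

theorem nhds_basis_Icc_of_dense [Finite ι] {A : Set ℝ} (hA : Dense A) (v : ι → ℝ) :
    (𝓝 v).HasBasis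
      (fun q : (ι → ℝ) × (ι → ℝ) ↦ ∀ i, q.1 i ∈ A ∧ q.2 i ∈ A ∧ q.1 i < v i ∧ v i < q.2 i)
      fun q ↦ Set.Icc q.1 q.2 := by
  have := Fintype.ofFinite ι
  refine ⟨fun s ↦ ⟨fun hs ↦ ?_, fun ⟨q, hq, hqs⟩ ↦ ?_⟩⟩
  · obtain ⟨ε, hε, hball⟩ := Metric.nhds_basis_closedBall.mem_iff.1 hs
    choose a ha hav using fun i ↦ hA.exists_between (sub_lt_self (v i) hε)
    choose b hb hbv using fun i ↦ hA.exists_between (lt_add_of_pos_right (v i) hε)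
    refine ⟨(a, b), fun i ↦ ⟨ha i, hb i, (hav i).2, (hbv i).1⟩, fun w hw ↦ hball ?_⟩
    rw [Metric.mem_closedBall, dist_pi_le_iff hε.le]
    intro i
    rw [Real.dist_eq, abs_sub_le_iff]
    constructor <;> linarith [hw.1 i, hw.2 i, (hav i).1, (hbv i).2]
  · refine Filter.mem_of_superset (?_ : Set.univ.pi (fun i ↦ Set.Ioo (q.1 i) (q.2 i)) ∈ 𝓝 v)
      fun w hw ↦ hqs ⟨fun i ↦ (hw i trivial).1.le, fun i ↦ (hw i trivial).2.le⟩
    exact set_pi_mem_nhds Set.finite_univ fun i _ ↦ Ioo_mem_nhds (hq i).2.2.1 (hq i).2.2.2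

/-- A wall through the image of `x` can disappear near `x` but cannot move, so as long as the number
of wall coordinates stays the same, those coordinates are constant. -/
theorem eventually_mem_box_iff_of_ncard_wallCoords_eq [Finite ι] {X : Type*} [TopologicalSpace X]
    {e : X → ι → ℝ} (he : Continuous e) {B : β → (ι → ℝ) × (ι → ℝ)}
    (hB : LocallyFinite fun b ↦ e ⁻¹' Set.Icc (B b).1 (B b).2) (x : X) :
    ∀ᶠ y in 𝓝 x, (wallCoords B (e y)).ncard = (wallCoords B (e x)).ncard →
      ∀ b, e y ∈ Set.Icc (B b).1 (B b).2 ↔ e x ∈ Set.Icc (B b).1 (B b).2 := by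
  have hmem : ∀ᶠ y in 𝓝 x, ∀ b, e y ∈ Set.Icc (B b).1 (B b).2 → e x ∈ Set.Icc (B b).1 (B b).2 :=
    hB.eventually_subset (fun b ↦ isClosed_Icc.preimage he) x
  have hstrict : ∀ᶠ y in 𝓝 x, ∀ b ∈ {b | e x ∈ Set.Icc (B b).1 (B b).2}, ∀ i,
      ((B b).1 i < e x i → (B b).1 i < e y i) ∧ (e x i < (B b).2 i → e y i < (B b).2 i) := by
    refine (Filter.eventually_all_finite (hB.point_finite x)).2 fun b _ ↦
      Filter.eventually_all.2 fun i ↦ ?_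
    have hi : ContinuousAt (fun y ↦ e y i) x := ((continuous_apply i).comp he).continuousAt
    exact (Filter.eventually_imp_distrib_left.2 fun h ↦ hi.eventually_const_lt h).and
      (Filter.eventually_imp_distrib_left.2 fun h ↦ hi.eventually_lt_const h)
  filter_upwards [hmem, hstrict] with y hyx hy hcard b
  have hface {b} (hb : e y ∈ Set.Icc (B b).1 (B b).2) (i) :
      (e y i = (B b).1 i → e x i = (B b).1 i) ∧ (e y i = (B b).2 i → e x i = (B b).2 i) := by
    have hxb := hyx b hb
    refine ⟨fun h ↦ ?_, fun h ↦ ?_⟩ <;> by_contra hne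
    · exact ((hy b hxb i).1 ((hxb.1 i).lt_of_ne' hne)).ne' h
    · exact ((hy b hxb i).2 ((hxb.2 i).lt_of_ne hne)).ne h
  have hsubset : wallCoords B (e y) ⊆ wallCoords B (e x) := fun i ⟨b, hb, hi⟩ ↦
    ⟨b, hyx b hb, hi.imp (hface hb i).1 (hface hb i).2⟩
  have hwalls : wallCoords B (e y) = wallCoords B (e x) :=
    Set.eq_of_subset_of_ncard_le hsubset hcard.ge
  have hconst : ∀ i ∈ wallCoords B (e x), e y i = e x i := by
    rw [← hwalls]
    rintro i ⟨b, hb, hi | hi⟩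
    · rw [hi, (hface hb i).1 hi]
    · rw [hi, (hface hb i).2 hi]
  refine ⟨hyx b, fun hxb ↦ ⟨fun i ↦ ?_, fun i ↦ ?_⟩⟩
  · obtain hi | hi := (hxb.1 i).lt_or_eq
    · exact ((hy b hxb i).1 hi).le
    · rw [hconst i ⟨b, hxb, .inl hi.symm⟩]
      exact hxb.1 i
  · obtain hi | hi := (hxb.2 i).lt_or_eq
    · exact ((hy b hxb i).2 hi).le
    · rw [hconst i ⟨b, hxb, .inr hi⟩]
      exact hxb.2 i

end Boxes

section OrbitSpace

open Topology MulAction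

universe u

variable {Γ ι : Type*} {X : Type u} [Group Γ] [MulAction Γ X]

/-- The projection of a space with a group action onto its space of orbits. -/
abbrev toOrbit (Γ : Type*) {X : Type*} [Group Γ] [MulAction Γ X] (x : X) : orbitRel.Quotient Γ X :=
  Quotient.mk _ x

theorem toOrbit_mem_image_iff {S : Set X} {x : X} :
    toOrbit Γ x ∈ toOrbit Γ '' S ↔ ∃ g : Γ, g • x ∈ S := by
  constructor
  · rintro ⟨y, hy, h⟩
    obtain ⟨g, rfl⟩ : ∃ g : Γ, g • x = y := orbitRel_apply.1 (Quotient.exact h)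
    exact ⟨g, hy⟩
  · rintro ⟨g, hg⟩
    exact ⟨_, hg, Quotient.sound ⟨g, rfl⟩⟩

variable [TopologicalSpace X] [ContinuousConstSMul Γ X] {e : X → ι → ℝ}

theorem nhds_toOrbit_basis [Finite ι] (he : IsInducing e) {A : Set ℝ} (hA : Dense A) (x : X) :
    (𝓝 (toOrbit Γ x)).HasBasis
      (fun q : (ι → ℝ) × (ι → ℝ) ↦ ∀ i, q.1 i ∈ A ∧ q.2 i ∈ A ∧ q.1 i < e x i ∧ e x i < q.2 i)
      fun q ↦ toOrbit Γ '' (e ⁻¹' Set.Icc q.1 q.2) := by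
  have hmap : (𝓝 x).map (toOrbit Γ) = 𝓝 (toOrbit Γ x) :=
    isOpenQuotientMap_quotientMk.map_nhds_eq x
  rw [← hmap, he.nhds_eq_comap]
  exact ((nhds_basis_Icc_of_dense hA (e x)).comap e).map _

variable [SecondCountableTopology X] [LocallyCompactSpace X]

theorem metrizableSpace_orbits [Finite Γ] [T2Space X] :
    TopologicalSpace.MetrizableSpace (orbitRel.Quotient Γ X) := by
  have : LocallyCompactSpace (orbitRel.Quotient Γ X) :=
    isOpenQuotientMap_quotientMk.locallyCompactSpace
  have : SecondCountableTopology (orbitRel.Quotient Γ X) :=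
    ContinuousConstSMul.secondCountableTopology
  infer_instance

theorem exists_locallyFinite_box_refinement [Finite Γ] [T2Space X] [Finite ι] (he : IsInducing e)
    {A : Set ℝ} (hA : Dense A) {U : Set (Set (orbitRel.Quotient Γ X))} (hU : ∀ u ∈ U, IsOpen u)
    (hcover : ⋃₀ U = Set.univ) :
    ∃ (α : Type u) (q : α → (ι → ℝ) × (ι → ℝ)), (∀ a i, (q a).1 i ∈ A ∧ (q a).2 i ∈ A) ∧
      ⋃ a, toOrbit Γ '' (e ⁻¹' Set.Icc (q a).1 (q a).2) = Set.univ ∧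
      (LocallyFinite fun a ↦ toOrbit Γ '' (e ⁻¹' Set.Icc (q a).1 (q a).2)) ∧
      ∀ a, ∃ u ∈ U, toOrbit Γ '' (e ⁻¹' Set.Icc (q a).1 (q a).2) ⊆ u := by
  have : LocallyCompactSpace (orbitRel.Quotient Γ X) :=
    isOpenQuotientMap_quotientMk.locallyCompactSpace
  have : SecondCountableTopology (orbitRel.Quotient Γ X) :=
    ContinuousConstSMul.secondCountableTopology
  choose u huU hu using Set.sUnion_eq_univ_iff.1 hcover
  have hbasis (y : orbitRel.Quotient Γ X) := nhds_toOrbit_basis (Γ := Γ) he hA y.out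
  simp only [toOrbit, Quotient.out_eq] at hbasis
  obtain ⟨α, c, q, hq, hqcover, hfin⟩ :=
    refinement_of_locallyCompact_sigmaCompact_of_nhds_basis fun y ↦
      (hbasis y).restrict_subset ((hU _ (huU y)).mem_nhds (hu y))
  exact ⟨α, q, fun a i ↦ ⟨((hq a).1 i).1, ((hq a).1 i).2.1⟩, hqcover, hfin,
    fun a ↦ ⟨u (c a), huU _, (hq a).2⟩⟩

end OrbitSpace

section TranslatedBoxes

open Topology MulAction

variable {Γ X ι α : Type*} [Group Γ] [MulAction Γ X] [MulAction Γ ι]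

/-- The translates under the group `Γ` of a family of boxes in `ι → ℝ`, for the action on `ι`. -/
def translateBoxes (Γ : Type*) [Group Γ] [MulAction Γ ι] (q : α → (ι → ℝ) × (ι → ℝ)) :
    α × Γ → (ι → ℝ) × (ι → ℝ) :=
  fun p ↦ (fun i ↦ (q p.1).1 (p.2 • i), fun i ↦ (q p.1).2 (p.2 • i))

variable {q : α → (ι → ℝ) × (ι → ℝ)} {e : X → ι → ℝ}

theorem mem_translateBoxes_iff (he : ∀ (g : Γ) x i, e (g • x) (g • i) = e x i) (p : α × Γ) (x : X) :
    e x ∈ Set.Icc (translateBoxes Γ q p).1 (translateBoxes Γ q p).2 ↔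
      e (p.2 • x) ∈ Set.Icc (q p.1).1 (q p.1).2 := by
  have hsurj : Function.Surjective fun i : ι ↦ p.2 • i := MulAction.surjective p.2
  simp only [Set.mem_Icc, Pi.le_def]
  rw [hsurj.forall (p := fun i ↦ (q p.1).1 i ≤ e (p.2 • x) i),
    hsurj.forall (p := fun i ↦ e (p.2 • x) i ≤ (q p.1).2 i)]
  simp only [he, translateBoxes]

theorem smul_mem_wallCoords_translateBoxes_iff (he : ∀ (g : Γ) x i, e (g • x) (g • i) = e x i)
    (g : Γ) (x : X) (i : ι) :
    g • i ∈ wallCoords (translateBoxes Γ q) (e (g • x)) ↔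
      i ∈ wallCoords (translateBoxes Γ q) (e x) := by
  simp only [wallCoords, Set.mem_ofPred_eq, Prod.exists, mem_translateBoxes_iff he, he]
  simp only [translateBoxes, smul_smul]
  exact exists_congr fun a ↦ ((Equiv.mulRight g).surjective.exists (p := fun h : Γ ↦
    e (h • x) ∈ Set.Icc (q a).1 (q a).2 ∧ (e x i = (q a).1 (h • i) ∨ e x i = (q a).2 (h • i)))).symm

theorem ncard_wallCoords_translateBoxes_smul (he : ∀ (g : Γ) x i, e (g • x) (g • i) = e x i)
    (g : Γ) (x : X) :
    (wallCoords (translateBoxes Γ q) (e (g • x))).ncard =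
      (wallCoords (translateBoxes Γ q) (e x)).ncard := by
  have hpreimage : (g • ·) ⁻¹' wallCoords (translateBoxes Γ q) (e (g • x)) =
      wallCoords (translateBoxes Γ q) (e x) :=
    Set.ext (smul_mem_wallCoords_translateBoxes_iff he g x)
  rw [← hpreimage, Set.ncard_preimage_of_injective_subset_range (MulAction.injective g)]
  simp [(MulAction.surjective g).range_eq]

variable [TopologicalSpace X] [Finite Γ]

theorem locallyFinite_translateBoxes (he : ∀ (g : Γ) x i, e (g • x) (g • i) = e x i)
    (hq : LocallyFinite fun a ↦ toOrbit Γ '' (e ⁻¹' Set.Icc (q a).1 (q a).2)) :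
    LocallyFinite fun p ↦ e ⁻¹' Set.Icc (translateBoxes Γ q p).1 (translateBoxes Γ q p).2 := by
  intro x
  obtain ⟨t, ht, hfin⟩ := hq.preimage_continuous (continuous_quotient_mk') x
  refine ⟨t, ht, (hfin.prod Set.finite_univ).subset ?_⟩
  rintro p ⟨y, hyp, hyt⟩
  exact ⟨⟨y, toOrbit_mem_image_iff.2 ⟨p.2, (mem_translateBoxes_iff he p y).1 hyp⟩, hyt⟩, trivial⟩

/-- The stratum of an orbit records how many of its coordinates lie on walls and, within it, the
boxes containing the orbit. Some coordinate avoids `A`, so the coordinates never all lie on walls.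
-/
theorem covDimLE_orbitQuotient [ContinuousConstSMul Γ X] [T2Space X] [SecondCountableTopology X]
    [LocallyCompactSpace X] [Fintype ι] (he : IsInducing e)
    (heq : ∀ (g : Γ) x i, e (g • x) (g • i) = e x i) {A : Set ℝ} (hA : Dense A)
    (hmiss : ∀ x, ∃ i, e x i ∉ A) {d : ℕ} (hd : Fintype.card ι ≤ d + 1) :
    CovDimLE (orbitRel.Quotient Γ X) d := by
  have := metrizableSpace_orbits (Γ := Γ) (X := X)
  refine covDimLE_of_exists_stratification fun U hU hcover ↦ ?_
  obtain ⟨α, q, hqA, hqcover, hqfin, hqU⟩ :=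
    exists_locallyFinite_box_refinement (Γ := Γ) he hA hU hcover
  let wallCount (x : X) : ℕ := (wallCoords (translateBoxes Γ q) (e x)).ncard
  let box (a : α) : Set (orbitRel.Quotient Γ X) := toOrbit Γ '' (e ⁻¹' Set.Icc (q a).1 (q a).2)
  have hcount (x : X) : wallCount x < d + 1 := by
    obtain ⟨i, hi⟩ := hmiss x
    exact (ncard_wallCoords_lt_card (fun b _ ↦ hqA b.1 _) hi).trans_le hd
  let rank : orbitRel.Quotient Γ X → Fin (d + 1) :=
    Quotient.lift (fun x ↦ ⟨wallCount x, hcount x⟩) fun _ y ⟨g, hg⟩ ↦ Fin.ext <| by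
      rw [← hg]
      exact ncard_wallCoords_translateBoxes_smul heq g y
  have hbox (a : α) (x : X) : toOrbit Γ x ∈ box a ↔ ∃ g : Γ,
      e x ∈ Set.Icc (translateBoxes Γ q (a, g)).1 (translateBoxes Γ q (a, g)).2 := by
    simp only [mem_translateBoxes_iff heq]
    exact toOrbit_mem_image_iff
  refine ⟨Set α, rank, fun y ↦ {a | y ∈ box a}, Quotient.ind fun x ↦ ?_, fun y ↦ ?_⟩
  · have hmap : (𝓝 x).map (toOrbit Γ) = 𝓝 (toOrbit Γ x) :=
      isOpenQuotientMap_quotientMk.map_nhds_eq x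
    change ∀ᶠ y in 𝓝 (toOrbit Γ x), _
    rw [← hmap, Filter.eventually_map]
    filter_upwards [eventually_mem_box_iff_of_ncard_wallCoords_eq he.continuous
      (locallyFinite_translateBoxes heq hqfin) x] with z hz hrank
    ext a
    change toOrbit Γ z ∈ box a ↔ toOrbit Γ x ∈ box a
    simp only [hbox, hz (congrArg Fin.val hrank)]
  · obtain ⟨a, ha⟩ := Set.iUnion_eq_univ_iff.1 hqcover y
    obtain ⟨u, huU, hu⟩ := hqU a
    exact ⟨u, huU, fun z _ htype ↦ hu (htype.superset ha)⟩

end TranslatedBoxes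

/-! ### The box distance on finite spaces -/

section BoxDistance

open Filter Topology
open scoped NNReal

variable {X Y : Type*} [MeasurableSpace X] [MeasurableSpace Y]

/-- The couplings of two measures, over which the box distance is an infimum. -/
structure IsCoupling (π : Measure (X × Y)) (μ : Measure X) (ν : Measure Y) : Prop where
  map_fst : π.map Prod.fst = μ
  map_snd : π.map Prod.snd = ν

variable {π : Measure (X × Y)} {μ : Measure X} {ν : Measure Y}

theorem isCoupling_prod [IsProbabilityMeasure μ] [IsProbabilityMeasure ν] :
    IsCoupling (μ.prod ν) μ ν :=
  ⟨by simp, by simp⟩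

theorem isCoupling_diag : IsCoupling (μ.map fun x ↦ (x, x)) μ μ :=
  ⟨(Measure.map_map measurable_fst (by fun_prop)).trans Measure.map_id,
    (Measure.map_map measurable_snd (by fun_prop)).trans Measure.map_id⟩

namespace IsCoupling

theorem isProbabilityMeasure [IsProbabilityMeasure μ] (h : IsCoupling π μ ν) :
    IsProbabilityMeasure π := by
  rw [← Measure.isProbabilityMeasure_map_iff measurable_fst.aemeasurable, h.map_fst]
  infer_instance

theorem map_right {Z : Type*} [MeasurableSpace Z] (h : IsCoupling π μ ν) {f : Y → Z}
    (hf : Measurable f) : IsCoupling (π.map (Prod.map id f)) μ (ν.map f) := by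
  constructor
  · rw [Measure.map_map measurable_fst (measurable_id.prodMap hf), ← h.map_fst]
    rfl
  · rw [Measure.map_map measurable_snd (measurable_id.prodMap hf), ← h.map_snd,
      Measure.map_map hf measurable_snd]
    rfl

theorem measureReal_preimage_fst (h : IsCoupling π μ ν) {s : Set X} (hs : MeasurableSet s) :
    π.real (Prod.fst ⁻¹' s) = μ.real s := by
  rw [← h.map_fst, map_measureReal_apply measurable_fst hs]

theorem measureReal_preimage_snd (h : IsCoupling π μ ν) {s : Set Y} (hs : MeasurableSet s) :
    π.real (Prod.snd ⁻¹' s) = ν.real s := by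
  rw [← h.map_snd, map_measureReal_apply measurable_snd hs]

/-- The missing mass `ν' - c • ν` is coupled independently. -/
theorem exists_smul_le [IsProbabilityMeasure μ] [IsProbabilityMeasure ν] {ν' : Measure Y}
    [IsProbabilityMeasure ν'] (h : IsCoupling π μ ν) {c : ℝ≥0} (hc : c • ν ≤ ν') :
    ∃ π', IsCoupling π' μ ν' ∧ c • π ≤ π' := by
  have hsub : ν' - c • ν + c • ν = ν' := Measure.sub_add_cancel_of_le hc
  have hmass : (c : ENNReal) + (ν' - c • ν) Set.univ = 1 := by
    simpa [add_comm] using congrArg (fun ρ : Measure Y ↦ ρ Set.univ) hsub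
  refine ⟨c • π + μ.prod (ν' - c • ν), ⟨?_, ?_⟩, Measure.le_add_right le_rfl⟩
  · rw [Measure.map_add _ _ measurable_fst, Measure.map_smul, h.map_fst, Measure.map_fst_prod]
    calc c • μ + (ν' - c • ν) Set.univ • μ = ((c : ENNReal) + (ν' - c • ν) Set.univ) • μ :=
          (add_smul (c : ENNReal) _ μ).symm
      _ = μ := by rw [hmass, one_smul]
  · rw [Measure.map_add _ _ measurable_snd, Measure.map_smul, h.map_snd, Measure.map_snd_prod,
      measure_univ, one_smul, add_comm, hsub]

end IsCoupling

variable {dX : X → X → ℝ} {dY : Y → Y → ℝ} {ε : ℝ} [Finite X] [Finite Y]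

theorem disF_lt_iff {X Y : Type*} [Finite X] [Finite Y] {dX : X → X → ℝ} {dY : Y → Y → ℝ}
    {S : Set (X × Y)} (hε : 0 < ε) :
    disF dX dY S < ε ↔ ∀ p ∈ S, ∀ q ∈ S, |dX p.1 q.1 - dY p.2 q.2| < ε := by
  have himage : {v | ∃ p ∈ S, ∃ q ∈ S, v = |dX p.1 q.1 - dY p.2 q.2|} =
      Set.image2 (fun p q ↦ |dX p.1 q.1 - dY p.2 q.2|) S S := by
    ext v
    simp only [Set.mem_ofPred_eq, Set.mem_image2, eq_comm]
  rw [disF, himage]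
  obtain hS | hS := S.eq_empty_or_nonempty
  · simpa [hS] using hε
  · rw [(S.toFinite.image2 _ S.toFinite).csSup_lt_iff (hS.image2 hS), Set.forall_mem_image2]

theorem boxDistF_lt_iff [IsProbabilityMeasure μ] [IsProbabilityMeasure ν] (hε : 0 < ε) :
    boxDistF dX dY μ ν < ε ↔ ∃ π, IsCoupling π μ ν ∧ ∃ S, 1 - ε < π.real S ∧
      ∀ p ∈ S, ∀ q ∈ S, |dX p.1 q.1 - dY p.2 q.2| < ε := by
  have hbdd : BddBelow {v | ∃ π : Measure (X × Y), π.map Prod.fst = μ ∧ π.map Prod.snd = ν ∧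
      ∃ S : Set (X × Y), v = max (1 - (π S).toReal) (disF dX dY S)} := by
    refine ⟨0, ?_⟩
    rintro _ ⟨π, -, -, S, rfl⟩
    exact le_max_of_le_right (Real.sSup_nonneg (by rintro _ ⟨p, -, q, -, rfl⟩; positivity))
  have hprod : IsCoupling (μ.prod ν) μ ν := isCoupling_prod
  rw [boxDistF, csInf_lt_iff hbdd ⟨_, _, hprod.map_fst, hprod.map_snd, ∅, rfl⟩]
  constructor
  · rintro ⟨_, ⟨π, hfst, hsnd, S, rfl⟩, hlt⟩
    obtain ⟨hS, hdis⟩ := max_lt_iff.1 hlt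
    exact ⟨π, ⟨hfst, hsnd⟩, S, sub_lt_comm.1 hS, (disF_lt_iff hε).1 hdis⟩
  · rintro ⟨π, hπ, S, hS, hdis⟩
    exact ⟨_, ⟨π, hπ.map_fst, hπ.map_snd, S, rfl⟩,
      max_lt (sub_lt_comm.1 hS) ((disF_lt_iff hε).2 hdis)⟩

theorem boxDistF_map_lt {Z : Type*} [MeasurableSpace Z] [Finite Z] {dZ : Z → Z → ℝ}
    [IsProbabilityMeasure μ] [IsProbabilityMeasure ν] (hε : 0 < ε) (f : Y ≃ᵐ Z)
    (hf : ∀ y y', dZ (f y) (f y') = dY y y') (h : boxDistF dX dY μ ν < ε) :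
    boxDistF dX dZ μ (ν.map f) < ε := by
  have : IsProbabilityMeasure (ν.map f) :=
    Measure.isProbabilityMeasure_map f.measurable.aemeasurable
  obtain ⟨π, hπ, S, hS, hdis⟩ := (boxDistF_lt_iff hε).1 h
  let g : X × Y ≃ᵐ X × Z := (MeasurableEquiv.refl X).prodCongr f
  refine (boxDistF_lt_iff hε).2 ⟨_, hπ.map_right f.measurable, g '' S, ?_, ?_⟩
  · have hg : (π.map g).real (g '' S) = π.real S := by
      simp [measureReal_def, g.map_apply, g.injective.preimage_image]
    exact hS.trans_eq hg.symm
  · rintro _ ⟨p, hp, rfl⟩ _ ⟨q, hq, rfl⟩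
    exact (congrArg (|dX p.1 q.1 - ·|) (hf p.2 q.2)).trans_lt (hdis p hp q hq)

variable [MeasurableSingletonClass Y]

theorem measure_le_of_singleton_le {ν ν' : Measure Y} (h : ∀ y, ν {y} ≤ ν' {y}) : ν ≤ ν' := by
  refine Measure.le_iff.2 fun s hs ↦ ?_
  rw [← Measure.tsum_indicator_apply_singleton ν s hs,
    ← Measure.tsum_indicator_apply_singleton ν' s hs]
  exact ENNReal.tsum_le_tsum fun y ↦ Set.indicator_le_indicator (h y)

theorem eventually_smul_le_of_tendsto {T : Type*} {l : Filter T} [IsFiniteMeasure ν]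
    {ν' : T → Measure Y} [∀ t, IsFiniteMeasure (ν' t)]
    (h : ∀ y, Tendsto (fun t ↦ (ν' t).real {y}) l (𝓝 (ν.real {y}))) {c : ℝ≥0} (hc : c < 1) :
    ∀ᶠ t in l, c • ν ≤ ν' t := by
  have hsingleton : ∀ᶠ t in l, ∀ y, c * ν.real {y} ≤ (ν' t).real {y} := by
    refine eventually_all.2 fun y ↦ ?_
    obtain h0 | hpos := (measureReal_nonneg (μ := ν) (s := {y})).eq_or_lt
    · exact .of_forall fun t ↦ by simp [← h0]
    · exact (h y).eventually_const_le (mul_lt_of_lt_one_left hpos hc)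
  filter_upwards [hsingleton] with t ht
  refine measure_le_of_singleton_le fun y ↦ ?_
  rw [← ENNReal.toReal_le_toReal (measure_ne_top _ _) (measure_ne_top _ _)]
  simpa [measureReal_def] using ht y

theorem eventually_boxDistF_lt {T : Type*} {l : Filter T} [IsProbabilityMeasure μ]
    [IsProbabilityMeasure ν] {dY' : T → Y → Y → ℝ} {ν' : T → Measure Y}
    [∀ t, IsProbabilityMeasure (ν' t)]
    (hd : ∀ y y', Tendsto (fun t ↦ dY' t y y') l (𝓝 (dY y y')))
    (hν : ∀ y, Tendsto (fun t ↦ (ν' t).real {y}) l (𝓝 (ν.real {y}))) (hε : 0 < ε)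
    (h : boxDistF dX dY μ ν < ε) : ∀ᶠ t in l, boxDistF dX (dY' t) μ (ν' t) < ε := by
  obtain ⟨π, hπ, S, hS, hdis⟩ := (boxDistF_lt_iff hε).1 h
  have := hπ.isProbabilityMeasure
  obtain ⟨c, hcS, hc⟩ : ∃ c : ℝ≥0, 1 - ε < c * π.real S ∧ c < 1 := by
    have hlim : Tendsto (fun c : ℝ≥0 ↦ c * π.real S) (𝓝[<] 1) (𝓝 (π.real S)) := by
      have : Continuous fun c : ℝ≥0 ↦ c * π.real S := by fun_prop
      simpa using (this.tendsto 1).mono_left nhdsWithin_le_nhds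
    have : (𝓝[<] (1 : ℝ≥0)).NeBot := nhdsLT_neBot_of_exists_lt ⟨0, one_pos⟩
    exact ((hlim.eventually_const_lt hS).and self_mem_nhdsWithin).exists
  have hdis' : ∀ᶠ t in l, ∀ p ∈ S, ∀ q ∈ S, |dX p.1 q.1 - dY' t p.2 q.2| < ε := by
    refine (eventually_all_finite S.toFinite).2 fun p hp ↦
      (eventually_all_finite S.toFinite).2 fun q hq ↦ ?_
    exact (tendsto_const_nhds.sub (hd p.2 q.2)).abs.eventually_lt_const (hdis p hp q hq)
  filter_upwards [hdis', eventually_smul_le_of_tendsto hν hc] with t ht hle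
  obtain ⟨π', hπ', hππ'⟩ := hπ.exists_smul_le hle
  have := hπ'.isProbabilityMeasure
  refine (boxDistF_lt_iff hε).2 ⟨π', hπ', S, ?_, ht⟩
  calc 1 - ε < c * π.real S := hcS
    _ = (c • π).real S := (measureReal_nnreal_smul_apply c).symm
    _ ≤ π'.real S := ENNReal.toReal_mono (measure_ne_top _ _) (hππ' S)

variable [MeasurableSingletonClass X]

theorem boxDistF_self_lt [IsProbabilityMeasure μ] (hε : 0 < ε) : boxDistF dX dX μ μ < ε := by
  refine (boxDistF_lt_iff hε).2 ⟨_, isCoupling_diag, Set.range fun x ↦ (x, x), ?_, ?_⟩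
  · rw [map_measureReal_apply (by fun_prop) (Set.toFinite _).measurableSet, Set.preimage_range]
    simpa using hε
  · rintro _ ⟨x, rfl⟩ _ ⟨y, rfl⟩
    simpa using hε

/-- The correspondence `S` must be the graph of a bijection, which then transports the measure up
to `π.real Sᶜ`. -/
theorem exists_equiv_of_boxDistF_lt [IsProbabilityMeasure μ] [IsProbabilityMeasure ν]
    (hcard : Nat.card X = Nat.card Y) (hε : 0 < ε) (hdX : ∀ x x', x ≠ x' → ε ≤ dX x x')
    (hμ : ∀ x, ε ≤ μ.real {x}) (hdY : ∀ y, dY y y = 0) (h : boxDistF dX dY μ ν < ε) :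
    ∃ σ : X ≃ Y, (∀ x x', |dX x x' - dY (σ x) (σ x')| < ε) ∧
      ∀ x, |μ.real {x} - ν.real {σ x}| < ε := by
  obtain ⟨π, hπ, S, hS, hdis⟩ := (boxDistF_lt_iff hε).1 h
  have := hπ.isProbabilityMeasure
  have hcompl : π.real Sᶜ < ε := by
    rw [probReal_compl_eq_one_sub S.toFinite.measurableSet]
    exact sub_lt_comm.1 hS
  have hrow (x : X) : ∃ y, (x, y) ∈ S := by
    by_contra! hx
    have hsubset : Prod.fst ⁻¹' {x} ⊆ Sᶜ := by
      rintro ⟨_, y⟩ rfl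
      exact hx y
    refine (hμ x).not_gt ?_
    calc μ.real {x} = π.real (Prod.fst ⁻¹' {x}) :=
          (hπ.measureReal_preimage_fst (measurableSet_singleton x)).symm
      _ ≤ π.real Sᶜ := measureReal_mono hsubset
      _ < ε := hcompl
  have hcol {x x' : X} {y : Y} (hx : (x, y) ∈ S) (hx' : (x', y) ∈ S) : x = x' := by
    by_contra hne
    have hlt := hdis _ hx _ hx'
    rw [hdY, sub_zero] at hlt
    exact ((hdX x x' hne).trans (le_abs_self _)).not_gt hlt
  choose f hf using hrow
  have hinj : f.Injective := fun x x' hxx' ↦ hcol (hf x) (hxx' ▸ hf x')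
  let σ : X ≃ Y := .ofBijective f ((Nat.bijective_iff_injective_and_card f).2 ⟨hinj, hcard⟩)
  have hgraph {x : X} {y : Y} (hxy : (x, y) ∈ S) : y = σ x := by
    have hmem : (σ.symm y, σ (σ.symm y)) ∈ S := hf _
    rw [σ.apply_symm_apply] at hmem
    rw [hcol hxy hmem, σ.apply_symm_apply]
  refine ⟨σ, fun x x' ↦ hdis _ (hf x) _ (hf x'), fun x ↦ ?_⟩
  have hsymmDiff : symmDiff (Prod.fst ⁻¹' {x}) (Prod.snd ⁻¹' {σ x}) ⊆ Sᶜ := by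
    rintro ⟨a, b⟩ (⟨rfl, hb⟩ | ⟨hb, ha⟩) hab
    · exact hb (hgraph hab)
    · exact ha (σ.injective ((hgraph hab).symm.trans hb))
  calc |μ.real {x} - ν.real {σ x}|
      = |π.real (Prod.fst ⁻¹' {x}) - π.real (Prod.snd ⁻¹' {σ x})| := by
        rw [hπ.measureReal_preimage_fst (measurableSet_singleton x),
          hπ.measureReal_preimage_snd (measurableSet_singleton (σ x))]
    _ ≤ π.real (symmDiff (Prod.fst ⁻¹' {x}) (Prod.snd ⁻¹' {σ x})) :=
        abs_measureReal_sub_le_measureReal_symmDiff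
          (measurable_fst (measurableSet_singleton x)).nullMeasurableSet
          (measurable_snd (measurableSet_singleton (σ x))).nullMeasurableSet
    _ ≤ π.real Sᶜ := measureReal_mono hsymmDiff
    _ < ε := hcompl

end BoxDistance

/-! ### The parameter space and its box topology -/

section PermAction

open scoped Pointwise

variable {n : ℕ}

instance : MulAction (Equiv.Perm (Fin n)) (Pairs n) where
  smul σ e := ⟨σ • e.1, (Finset.card_smul_finset σ e.1).trans e.2⟩
  one_smul e := Subtype.ext (one_smul _ e.1)
  mul_smul σ τ e := Subtype.ext (mul_smul σ τ e.1)

theorem smul_pairOf (σ : Equiv.Perm (Fin n)) {i j : Fin n} (h : i ≠ j) :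
    σ • pairOf i j h = pairOf (σ i) (σ j) (σ.injective.ne h) :=
  Subtype.ext ((Finset.image_insert _ _ _).trans (congrArg _ (Finset.image_singleton _ _)))

theorem smul_mem_MMparam (σ : Equiv.Perm (Fin n)) {p : (Pairs n → ℝ) × (Fin n → ℝ)}
    (hp : p ∈ MMparam n) : (fun e ↦ p.1 (σ • e), fun i ↦ p.2 (σ i)) ∈ MMparam n := by
  obtain ⟨⟨hr, htriangle⟩, hs, hsum⟩ := hp
  refine ⟨⟨fun e ↦ hr _, fun i j k hij hjk hik ↦ ?_⟩, fun i ↦ hs _,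
    (Equiv.sum_comp σ p.2).trans hsum⟩
  simp only [smul_pairOf]
  exact htriangle _ _ _ _ _ _

/-- Relabelling of the points: `σ` moves the point `i` to `σ i`. -/
instance : MulAction (Equiv.Perm (Fin n)) (MMparam n) where
  smul σ x := ⟨_, smul_mem_MMparam σ⁻¹ x.2⟩
  one_smul x := Subtype.ext (Prod.ext (funext fun e ↦ congrArg x.1.1 (by simp)) rfl)
  mul_smul σ τ x :=
    Subtype.ext (Prod.ext (funext fun e ↦ congrArg x.1.1 (by simp [mul_smul])) rfl)

theorem smul_fst_smul (σ : Equiv.Perm (Fin n)) (x : MMparam n) (e : Pairs n) :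
    (σ • x).1.1 (σ • e) = x.1.1 e :=
  congrArg x.1.1 (inv_smul_smul σ e)

theorem smul_snd_apply (σ : Equiv.Perm (Fin n)) (x : MMparam n) (i : Fin n) :
    (σ • x).1.2 (σ i) = x.1.2 i :=
  congrArg x.1.2 (σ.symm_apply_apply i)

instance : ContinuousConstSMul (Equiv.Perm (Fin n)) (MMparam n) where
  continuous_const_smul σ := by
    refine Continuous.subtype_mk (Continuous.prodMk ?_ ?_) _ <;> fun_prop

end PermAction

section BoxTopology

open Topology Filter MulAction

variable {n : ℕ}

theorem drDist_of_ne (r : Pairs n → ℝ) {i j : Fin n} (h : i ≠ j) :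
    drDist r i j = r (pairOf i j h) :=
  dif_neg h

theorem drDist_self (r : Pairs n → ℝ) (i : Fin n) : drDist r i i = 0 :=
  dif_pos rfl

theorem drDist_smul (σ : Equiv.Perm (Fin n)) (x : MMparam n) (i j : Fin n) :
    drDist (σ • x).1.1 (σ i) (σ j) = drDist x.1.1 i j := by
  obtain rfl | h := eq_or_ne i j
  · simp only [drDist_self]
  · rw [drDist_of_ne _ h, drDist_of_ne _ (σ.injective.ne h), ← smul_pairOf, smul_fst_smul]

theorem muS_apply_singleton (s : Fin n → ℝ) (i : Fin n) : muS s {i} = ENNReal.ofReal (s i) := by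
  simp [muS, Measure.finsetSum_apply, Set.indicator_apply]

theorem muS_real_singleton (x : MMparam n) (i : Fin n) : (muS x.1.2).real {i} = x.1.2 i := by
  rw [measureReal_def, muS_apply_singleton, ENNReal.toReal_ofReal (x.2.2.1 i).le]

instance (x : MMparam n) : IsProbabilityMeasure (muS x.1.2) where
  measure_univ := by
    simp [muS, Measure.finsetSum_apply, ← ENNReal.ofReal_sum_of_nonneg fun i _ ↦ (x.2.2.1 i).le,
      x.2.2.2]

theorem muS_smul (σ : Equiv.Perm (Fin n)) (x : MMparam n) :
    muS (σ • x).1.2 = (muS x.1.2).map σ := by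
  refine Measure.ext_of_singleton fun i ↦ ?_
  obtain ⟨i, rfl⟩ := σ.surjective i
  have hpre : σ ⁻¹' {σ i} = {i} := by
    rw [← Set.image_singleton, σ.injective.preimage_image]
  rw [Measure.map_apply (by fun_prop) (measurableSet_singleton _), hpre, muS_apply_singleton,
    muS_apply_singleton, smul_snd_apply]

theorem boxD_smul_lt {x y : MMparam n} {ε : ℝ} (hε : 0 < ε) (σ : Equiv.Perm (Fin n))
    (h : boxD x.1 y.1 < ε) : boxD x.1 (σ • y).1 < ε := by
  rw [boxD, muS_smul]
  exact boxDistF_map_lt hε ⟨σ, by fun_prop, by fun_prop⟩ (drDist_smul σ y) h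

theorem isOpen_boxBall (x : MMparam n) {ε : ℝ} (hε : 0 < ε) :
    IsOpen {y : MMparam n | boxD x.1 y.1 < ε} := by
  refine isOpen_iff_eventually.2 fun y hy ↦ eventually_boxDistF_lt (fun i j ↦ ?_) (fun i ↦ ?_) hε hy
  · refine Continuous.tendsto (f := fun z : MMparam n ↦ drDist z.1.1 i j) ?_ y
    unfold drDist
    split_ifs <;> fun_prop
  · simp only [muS_real_singleton]
    exact Continuous.tendsto (f := fun z : MMparam n ↦ z.1.2 i) (by fun_prop) y

theorem exists_dist_smul_lt_of_boxD_lt {x y : MMparam n} {ε : ℝ} (hε : 0 < ε)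
    (hr : ∀ e, ε ≤ x.1.1 e) (hs : ∀ i, ε ≤ x.1.2 i) (h : boxD x.1 y.1 < ε) :
    ∃ σ : Equiv.Perm (Fin n), dist (σ • y) x < ε := by
  obtain ⟨σ, hd, hm⟩ := exists_equiv_of_boxDistF_lt rfl hε
    (fun i j hij ↦ (hr _).trans_eq (drDist_of_ne _ hij).symm)
    (fun i ↦ (hs i).trans_eq (muS_real_singleton x i).symm) (drDist_self _) h
  refine ⟨σ⁻¹, ?_⟩
  rw [Subtype.dist_eq, Prod.dist_eq, max_lt_iff, dist_comm, dist_pi_lt_iff hε, dist_comm,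
    dist_pi_lt_iff hε]
  refine ⟨fun e ↦ ?_, fun i ↦ ?_⟩
  · obtain ⟨i, j, hij, he⟩ := Finset.card_eq_two.1 e.2
    obtain rfl : e = pairOf i j hij := Subtype.ext he
    rw [← drDist_of_ne x.1.1 hij, ← drDist_of_ne (σ⁻¹ • y).1.1 hij, Real.dist_eq,
      ← drDist_smul σ (σ⁻¹ • y), smul_inv_smul]
    exact hd i j
  · rw [Real.dist_eq, ← smul_snd_apply σ (σ⁻¹ • y), smul_inv_smul, ← muS_real_singleton,
      ← muS_real_singleton]
    exact hm i

theorem exists_pos_le_coords (x : MMparam n) :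
    ∃ ε > 0, (∀ e, ε ≤ x.1.1 e) ∧ ∀ i, ε ≤ x.1.2 i := by
  have hr : ∀ᶠ ε : ℝ in 𝓝[>] 0, ∀ e, ε ≤ x.1.1 e := eventually_all.2 fun e ↦
    eventually_nhdsWithin_of_eventually_nhds (eventually_le_nhds (x.2.1.1 e))
  have hs : ∀ᶠ ε : ℝ in 𝓝[>] 0, ∀ i, ε ≤ x.1.2 i := eventually_all.2 fun i ↦
    eventually_nhdsWithin_of_eventually_nhds (eventually_le_nhds (x.2.2.1 i))
  exact (eventually_mem_nhdsWithin.and (hr.and hs)).exists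

theorem boxTop_eq_induced :
    boxTop n = .induced (toOrbit (Equiv.Perm (Fin n))) inferInstance := by
  refine le_antisymm ?_ (le_generateFrom ?_)
  · rintro _ ⟨V, hV, rfl⟩
    refine (@isOpen_iff_forall_mem_open _ (boxTop n) _).2 fun x hx ↦ ?_
    obtain ⟨δ, hδ, hball⟩ := Metric.isOpen_iff.1 (hV.preimage continuous_quotient_mk') x hx
    obtain ⟨ε, hε, hr, hs⟩ := exists_pos_le_coords x
    have hmin : 0 < min ε δ := lt_min hε hδ
    refine ⟨{y | boxD x.1 y.1 < min ε δ}, fun y hy ↦ ?_,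
      TopologicalSpace.isOpen_generateFrom_of_mem ⟨x, _, hmin, rfl⟩, boxDistF_self_lt hmin⟩
    obtain ⟨σ, hσ⟩ := exists_dist_smul_lt_of_boxD_lt hmin (fun e ↦ (min_le_left _ _).trans (hr e))
      (fun i ↦ (min_le_left _ _).trans (hs i)) hy
    have horbit : toOrbit (Equiv.Perm (Fin n)) (σ • y) = toOrbit _ y := Quotient.sound ⟨σ, rfl⟩
    rw [Set.mem_preimage, ← horbit]
    exact hball (hσ.trans_le (min_le_right _ _))
  · rintro _ ⟨x, ε, hε, rfl⟩
    refine ⟨toOrbit _ '' {y | boxD x.1 y.1 < ε},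
      isOpenQuotientMap_quotientMk.isOpenMap _ (isOpen_boxBall x hε), Set.ext fun y ↦ ?_⟩
    rw [Set.mem_preimage, toOrbit_mem_image_iff]
    refine ⟨fun ⟨σ, hσ⟩ ↦ ?_, fun hy ↦ ⟨1, by simpa using hy⟩⟩
    have hy := boxD_smul_lt hε σ⁻¹ hσ
    rwa [inv_smul_smul] at hy

theorem isInducing_toOrbit_boxTop :
    @IsInducing _ _ (boxTop n) _ (toOrbit (Equiv.Perm (Fin n)) : MMparam n → _) :=
  @IsInducing.mk _ _ (boxTop n) _ _ boxTop_eq_induced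

theorem covDim_boxTop :
    @covDim _ (boxTop n) = covDim (orbitRel.Quotient (Equiv.Perm (Fin n)) (MMparam n)) :=
  @covDim_eq_of_isInducing_of_surjective _ _ (boxTop n) _ _ isInducing_toOrbit_boxTop
    Quotient.mk_surjective

end BoxTopology

/-! ### The dimension of the parameter space modulo relabelling -/

section ParameterDimension

open Topology MulAction

variable {n m : ℕ}

theorem isOpen_forall_pos {ι : Type*} [Finite ι] : IsOpen {x : ι → ℝ | ∀ i, 0 < x i} := by
  rw [Set.ofPred_forall]
  exact isOpen_iInter_of_finite fun i ↦ isOpen_lt continuous_const (continuous_apply i)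

theorem isLocallyClosed_RnSet : IsLocallyClosed (RnSet n) := by
  have htriangle : IsClosed {r : Pairs n → ℝ | ∀ (i j k : Fin n) (hij : i ≠ j) (hjk : j ≠ k)
      (hik : i ≠ k), r (pairOf i k hik) ≤ r (pairOf i j hij) + r (pairOf j k hjk)} := by
    simp only [Set.ofPred_forall]
    repeat refine isClosed_iInter fun _ ↦ ?_
    exact isClosed_le (by fun_prop) (by fun_prop)
  exact isOpen_forall_pos.isLocallyClosed.inter htriangle.isLocallyClosed

theorem isLocallyClosed_SimplexSet : IsLocallyClosed (SimplexSet n) :=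
  isOpen_forall_pos.isLocallyClosed.inter
    (isClosed_eq (by fun_prop) continuous_const).isLocallyClosed

instance : LocallyCompactSpace (MMparam n) :=
  ((isLocallyClosed_RnSet.preimage continuous_fst).inter
    (isLocallyClosed_SimplexSet.preimage continuous_snd)).locallyCompactSpace

/-- The parameter `(r, s)` as a single real vector. -/
def paramVec (x : MMparam n) : Pairs n ⊕ Fin n → ℝ :=
  Sum.elim x.1.1 x.1.2

theorem isInducing_paramVec : IsInducing (paramVec (n := n)) :=
  Homeomorph.sumArrowHomeomorphProdArrow.symm.isInducing.comp .subtypeVal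

theorem paramVec_smul (σ : Equiv.Perm (Fin n)) (x : MMparam n) (i : Pairs n ⊕ Fin n) :
    paramVec (σ • x) (σ • i) = paramVec x i := by
  obtain e | i := i
  · exact smul_fst_smul σ x e
  · exact smul_snd_apply σ x i

theorem card_pairs_add (m : ℕ) :
    Fintype.card (Pairs (m + 1)) + m = (m + 3) * m / 2 := by
  rw [Fintype.card_finset_len, Fintype.card_fin, Nat.choose_two_right, Nat.add_sub_cancel,
    ← Nat.add_mul_div_right _ _ two_pos]
  ring_nf

theorem dense_rat_add_sqrt_two : Dense (Set.range fun q : ℚ ↦ (q : ℝ) + √2) :=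
  (Homeomorph.addRight √2).surjective.denseRange.comp Rat.denseRange_cast
    (Homeomorph.addRight √2).continuous

theorem exists_notMem_rat_add_sqrt_two {ι : Type*} [Fintype ι] [Nonempty ι] {s : ι → ℝ}
    (hs : ∑ i, s i = 1) : ∃ i, s i ∉ Set.range fun q : ℚ ↦ (q : ℝ) + √2 := by
  by_contra! h
  choose q hq using h
  refine irrational_sqrt_two ⟨(1 - ∑ i, q i) / Fintype.card ι, ?_⟩
  simp_rw [← hq, Finset.sum_add_distrib, Finset.sum_const, nsmul_eq_mul, Finset.card_univ] at hs
  push_cast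
  rw [← hs]
  field_simp
  ring

theorem covDimLE_orbits_MMparam (m : ℕ) :
    CovDimLE (orbitRel.Quotient (Equiv.Perm (Fin (m + 1))) (MMparam (m + 1)))
      ((m + 3) * m / 2) := by
  refine covDimLE_orbitQuotient isInducing_paramVec paramVec_smul dense_rat_add_sqrt_two
    (fun x ↦ ?_) ?_
  · obtain ⟨i, hi⟩ := exists_notMem_rat_add_sqrt_two x.2.2.2
    exact ⟨.inr i, hi⟩
  · rw [← card_pairs_add, Fintype.card_sum, Fintype.card_fin, add_assoc]

theorem injOn_toOrbit_strictMono :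
    Set.InjOn (toOrbit (Equiv.Perm (Fin n))) {x : MMparam n | StrictMono x.1.2} := by
  intro x hx y hy hxy
  obtain ⟨σ, rfl : σ • y = x⟩ := Quotient.exact hxy
  have hsymm : y.1.2 ∘ σ.symm = (σ • y).1.2 := rfl
  have heq : (σ • y).1.2 = y.1.2 :=
    (hx.range_inj hy).1 (by rw [← hsymm, σ.symm.surjective.range_comp])
  have hσ : σ = 1 := Equiv.ext fun i ↦ hy.injective <| by
    rw [← heq, smul_snd_apply, heq]; rfl
  rw [hσ, one_smul]

/-- An increasing sequence of weights, perturbed by `t` in all coordinates but the last: the last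
one is kept fixed so that `t` can be recovered after normalisation. -/
noncomputable def staircase (t : Fin m → unitInterval) (i : Fin (m + 1)) : ℝ :=
  i + 1 + ((Fin.snoc t 0 : Fin (m + 1) → unitInterval) i) / 2

theorem strictMono_staircase (t : Fin m → unitInterval) : StrictMono (staircase t) := by
  intro i j hij
  have hij' : (i : ℝ) + 1 ≤ j := mod_cast hij
  have hi := unitInterval.le_one ((Fin.snoc t 0 : Fin (m + 1) → unitInterval) i)
  have hj := unitInterval.nonneg ((Fin.snoc t 0 : Fin (m + 1) → unitInterval) j)
  unfold staircase
  linarith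

theorem staircase_pos (t : Fin m → unitInterval) (i : Fin (m + 1)) : 0 < staircase t i := by
  have hi := unitInterval.nonneg ((Fin.snoc t 0 : Fin (m + 1) → unitInterval) i)
  unfold staircase
  positivity

theorem sum_staircase_pos (t : Fin m → unitInterval) : 0 < ∑ i, staircase t i :=
  Finset.sum_pos (fun i _ ↦ staircase_pos t i) Finset.univ_nonempty

theorem staircase_injective : Function.Injective (staircase (m := m)) := by
  intro t t' h
  funext i
  have hi := congrFun h i.castSucc
  simpa [staircase, Subtype.ext_iff] using hi

theorem continuous_staircase : Continuous (staircase (m := m)) := by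
  unfold staircase
  fun_prop

theorem div_sum_mem_SimplexSet [NeZero n] {w : Fin n → ℝ} (hw : ∀ i, 0 < w i) :
    (fun i ↦ w i / ∑ j, w j) ∈ SimplexSet n := by
  have hsum : 0 < ∑ j, w j := Finset.sum_pos (fun j _ ↦ hw j) Finset.univ_nonempty
  exact ⟨fun i ↦ div_pos (hw i) hsum, by rw [← Finset.sum_div, div_self hsum.ne']⟩

theorem eq_of_div_sum_eq {ι : Type*} [Fintype ι] {w w' : ι → ℝ} (hw : ∀ i, 0 < w i)
    {k : ι} (hk : w k = w' k) (h : ∀ i, w i / ∑ j, w j = w' i / ∑ j, w' j) : w = w' := by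
  have hsum : ∑ j, w j = ∑ j, w' j := by
    simpa only [← hk, div_eq_mul_inv, mul_right_inj' (hw k).ne', inv_inj] using h k
  have hpos : 0 < ∑ j, w j := Finset.sum_pos (fun j _ ↦ hw j) ⟨k, Finset.mem_univ k⟩
  refine funext fun i ↦ (div_left_inj' hpos.ne').1 ?_
  rw [h i, hsum]

theorem one_add_mem_RnSet (t : Pairs n → unitInterval) : (fun e ↦ 1 + (t e : ℝ)) ∈ RnSet n := by
  refine ⟨fun e ↦ add_pos_of_pos_of_nonneg one_pos (t e).2.1, fun i j k hij hjk hik ↦ ?_⟩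
  linarith [(t (pairOf i k hik)).2.2, (t (pairOf i j hij)).2.1, (t (pairOf j k hjk)).2.1]

/-- A cube of parameters with increasing weights. Distances in `[1, 2]` always satisfy the triangle
inequality. -/
noncomputable def cubeParam (t : Pairs (m + 1) ⊕ Fin m → unitInterval) : MMparam (m + 1) :=
  ⟨(_, _), one_add_mem_RnSet fun e ↦ t (.inl e),
    div_sum_mem_SimplexSet (staircase_pos fun i ↦ t (.inr i))⟩

theorem continuous_cubeParam : Continuous (cubeParam (m := m)) := by
  have hw (i) : Continuous fun t : Pairs (m + 1) ⊕ Fin m → unitInterval ↦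
      staircase (fun j ↦ t (.inr j)) i :=
    (continuous_apply i).comp (continuous_staircase.comp (by fun_prop))
  refine Continuous.subtype_mk (Continuous.prodMk (by fun_prop) (continuous_pi fun i ↦ ?_)) _
  exact (hw i).div (continuous_finsetSum _ fun j _ ↦ hw j)
    fun t ↦ (sum_staircase_pos _).ne'

theorem cubeParam_injective : Function.Injective (cubeParam (m := m)) := by
  intro t t' h
  have hr (e) : (1 : ℝ) + t (.inl e) = 1 + t' (.inl e) := congrArg (fun x ↦ x.1.1 e) h
  have hs : staircase (fun i ↦ t (.inr i)) = staircase fun i ↦ t' (.inr i) :=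
    eq_of_div_sum_eq (staircase_pos _) (k := Fin.last m) (by simp [staircase])
      fun i ↦ congrArg (fun x ↦ x.1.2 i) h
  funext i
  obtain e | i := i
  · exact Subtype.ext (add_left_cancel (hr e))
  · exact congrFun (staircase_injective hs) i

theorem strictMono_cubeParam_snd (t : Pairs (m + 1) ⊕ Fin m → unitInterval) :
    StrictMono (cubeParam t).1.2 := fun _ _ hij ↦
  div_lt_div_of_pos_right (strictMono_staircase _ hij) (sum_staircase_pos _)

theorem le_of_covDimLE_orbits_MMparam {k : ℕ}
    (h : CovDimLE (orbitRel.Quotient (Equiv.Perm (Fin (m + 1))) (MMparam (m + 1))) k) :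
    (m + 3) * m / 2 ≤ k := by
  have hemb : IsClosedEmbedding (toOrbit (Equiv.Perm (Fin (m + 1))) ∘ cubeParam (m := m)) :=
    (continuous_quotient_mk'.comp continuous_cubeParam).isClosedEmbedding fun t t' htt' ↦
      cubeParam_injective <|
        injOn_toOrbit_strictMono (strictMono_cubeParam_snd t) (strictMono_cubeParam_snd t') htt'
  rw [← card_pairs_add]
  simpa using (h.of_isInducing hemb.isInducing hemb.isClosed_range).card_le_of_cube

end ParameterDimension

/-- The space `X_{=n}` of mm-isomorphism classes of metric measure spaces whose support has
exactly `n` points, with the box distance, has covering dimension `(n+2)(n-1)/2`. -/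
theorem stmt15 (n : ℕ) (hn : 1 ≤ n) :
    @covDim ↥(MMparam n) (boxTop n) = (↑((n + 2) * (n - 1) / 2) : ℕ∞) := by
  obtain ⟨m, rfl⟩ := Nat.exists_eq_add_of_le' hn
  rw [covDim_boxTop]
  exact covDim_eq (covDimLE_orbits_MMparam m) fun k hk ↦ le_of_covDimLE_orbits_MMparam hk
end

section
/- The space GH_{≤n} of isometry classes of metric spaces with at most n points, with the Gromov-Hausdorff distance, has covering dimension exactly n(n−1)/2. -/
/-!
Every open cover of `GH_{≤n}` has an open refinement of multiplicity at most `n(n-1)/2 + 1` because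
the space is a union of `n(n-1)/2 + 1` zero-dimensional pieces. The dense sets
`T i = {r + i√2 | r ∈ ℚ}` are pairwise disjoint, and a space with at most `n` points has at most
`n(n-1)/2` nonzero distances, so for one of any `n(n-1)/2 + 1` indices `i` none of them lies in
`T i`. The spaces avoiding `T i` form a zero-dimensional piece: restricting each distance to
a small interval with endpoints in `T i` gives small neighbourhoods whose frontiers contain no such
space.

Conversely, weights in `[1, 2]` on the edges of the complete graph on `n` vertices always define a
metric. If the weights of different edges are confined to disjoint intervals, an isometry cannot
move an edge, so a cube of dimension `n(n-1)/2` embeds in `GH_{≤n}`. That the cube has at least its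
expected dimension is Lebesgue's covering theorem, which follows from the Poincaré–Miranda theorem.
The latter is discretized to a lattice: give the points labels in `ℤ/2` by the sign of each
coordinate function. The cup product of the coboundaries of these labellings is itself a coboundary,
so its sum over the grid reduces to the boundary and equals `1`, which produces a small cell on
which every coordinate function changes sign.
-/

open Set Topology unitInterval GromovHausdorff

section CoveringDimension

variable {X Y : Type*} [TopologicalSpace X] [TopologicalSpace Y]

theorem covDim_eq_s16 {d : ℕ} (hd : CovDimLE X d) (hlt : ∀ k < d, ¬ CovDimLE X k) :
    covDim X = d := by
  refine le_antisymm (sInf_le ⟨d, rfl, hd⟩) (le_sInf ?_)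
  rintro _ ⟨k, rfl, hk⟩
  exact_mod_cast not_lt.1 fun hkd => hlt k hkd hk

theorem covDimLE_of_isClosedEmbedding {f : Y → X} (hf : IsClosedEmbedding f) {n : ℕ}
    (hX : CovDimLE X n) : CovDimLE Y n := by
  intro U hU hUcov
  obtain ⟨V, hVo, hVcov, hVU, hV⟩ :=
    hX {w | IsOpen w ∧ ((f ⁻¹' w).Nonempty → ∃ u ∈ U, f ⁻¹' w ⊆ u)} (fun w hw => hw.1) <| by
      refine eq_univ_of_forall fun x => ?_
      by_cases hx : x ∈ range f
      · obtain ⟨y, rfl⟩ := hx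
        obtain ⟨u, hu, hyu⟩ := hUcov.ge (mem_univ y)
        obtain ⟨w, hw, rfl⟩ := hf.isInducing.isOpen_iff.1 (hU u hu)
        exact ⟨w, ⟨hw, fun _ => ⟨_, hu, subset_rfl⟩⟩, hyu⟩
      · refine ⟨(range f)ᶜ, ⟨hf.isClosed_range.isOpen_compl, ?_⟩, hx⟩
        rintro ⟨y, hy⟩
        exact absurd (mem_range_self y) hy
  refine ⟨{w | ∃ v ∈ V, w = f ⁻¹' v ∧ w.Nonempty}, ?_, ?_, ?_, fun y => ?_⟩
  · rintro _ ⟨v, hv, rfl, -⟩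
    exact (hVo v hv).preimage hf.continuous
  · refine eq_univ_of_forall fun y => ?_
    obtain ⟨v, hv, hyv⟩ := hVcov.ge (mem_univ (f y))
    exact ⟨f ⁻¹' v, ⟨v, hv, rfl, y, hyv⟩, hyv⟩
  · rintro _ ⟨v, hv, rfl, hne⟩
    obtain ⟨w, hw, hvw⟩ := hVU v hv
    obtain ⟨u, hu, hwu⟩ := hw.2 (hne.mono (preimage_mono hvw))
    exact ⟨u, hu, (preimage_mono hvw).trans hwu⟩
  · refine (encard_le_encard ?_).trans ((encard_image_le (f ⁻¹' ·) _).trans (hV (f y)))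
    rintro _ ⟨⟨v, hv, rfl, -⟩, hyv⟩
    exact ⟨v, ⟨hv, hyv⟩, rfl⟩

/-- The subset `Z` of `X` is zero-dimensional relative to `X`: its points have arbitrarily small
open neighbourhoods in `X` whose frontiers miss `Z`. Taking the neighbourhoods in `X` rather than
in the subspace `Z` allows covers of `Z` to be refined by open sets of `X`. -/
def IsZeroDimensionalIn (Z : Set X) : Prop :=
  ∀ z ∈ Z, ∀ O ∈ 𝓝 z, ∃ W, IsOpen W ∧ z ∈ W ∧ W ⊆ O ∧ Disjoint (frontier W) Z

theorem exists_countable_cover_of_isZeroDimensionalIn [HereditarilyLindelofSpace X] {Z : Set X}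
    (hZ : IsZeroDimensionalIn Z) {U : Set (Set X)} (hU : ∀ u ∈ U, IsOpen u) (hZU : Z ⊆ ⋃₀ U) :
    ∃ W : Set (Set X), W.Countable ∧ Z ⊆ ⋃₀ W ∧
      ∀ w ∈ W, IsOpen w ∧ Disjoint (frontier w) Z ∧ ∃ u ∈ U, w ⊆ u := by
  have hnhds : ∀ z : Z, ∃ w, IsOpen w ∧ (z : X) ∈ w ∧ Disjoint (frontier w) Z ∧
      ∃ u ∈ U, w ⊆ u := by
    rintro ⟨z, hz⟩
    obtain ⟨u, hu, hzu⟩ := hZU hz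
    obtain ⟨w, hwo, hzw, hwu, hw⟩ := hZ z hz u ((hU u hu).mem_nhds hzu)
    exact ⟨w, hwo, hzw, hw, u, hu, hwu⟩
  choose w hwo hzw hw hwU using hnhds
  obtain ⟨t, ht, hZt⟩ := (HereditarilyLindelofSpace.isLindelof Z).elim_countable_subcover w hwo
    fun z hz => mem_iUnion.2 ⟨⟨z, hz⟩, hzw ⟨z, hz⟩⟩
  refine ⟨w '' t, ht.image w, by rwa [sUnion_image], ?_⟩
  rintro _ ⟨z, -, rfl⟩
  exact ⟨hwo z, hw z, hwU z⟩

theorem exists_disjoint_refinement_of_isZeroDimensionalIn [HereditarilyLindelofSpace X]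
    {Z : Set X} (hZ : IsZeroDimensionalIn Z) {U : Set (Set X)} (hU : ∀ u ∈ U, IsOpen u)
    (hZU : Z ⊆ ⋃₀ U) :
    ∃ V : Set (Set X), (∀ v ∈ V, IsOpen v) ∧ Z ⊆ ⋃₀ V ∧ (∀ v ∈ V, ∃ u ∈ U, v ⊆ u) ∧
      V.PairwiseDisjoint id := by
  obtain ⟨W, hWcount, hZW, hW⟩ := exists_countable_cover_of_isZeroDimensionalIn hZ hU hZU
  obtain ⟨rank, hrank⟩ := hWcount.exists_injective_nat
  -- Removing closures keeps the sets open, and costs no point of `Z` because frontiers miss `Z`.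
  let trim (w : W) : Set X := w \ ⋃ w' ∈ {w' : W | rank w' < rank w}, closure w'
  have trim_disjoint : ∀ {w w'}, rank w < rank w' → Disjoint (trim w) (trim w') :=
    fun {w w'} h => disjoint_left.2 fun x hx hx' =>
      hx'.2 (mem_biUnion (show rank w < rank w' from h) (subset_closure hx.1))
  refine ⟨range trim, ?_, fun z hz => ?_, ?_, ?_⟩
  · rintro _ ⟨w, rfl⟩
    have hfin : {w' : W | rank w' < rank w}.Finite :=
      (finite_lt_nat (rank w)).preimage hrank.injOn
    exact (hW w w.2).1.sdiff (hfin.isClosed_biUnion fun w' _ => isClosed_closure)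
  · have hex : {w : W | z ∈ (w : Set X)}.Nonempty := by
      obtain ⟨w, hw, hzw⟩ := hZW hz
      exact ⟨⟨w, hw⟩, hzw⟩
    obtain ⟨w, hzw, hmin⟩ := exists_minimalFor_of_wellFoundedLT _ rank hex
    refine ⟨trim w, mem_range_self w, hzw, ?_⟩
    simp only [mem_iUnion, not_exists]
    intro w' hlt hzw'
    have hmem : z ∈ (w' : Set X) := by
      by_contra hnot
      have hfr : z ∈ frontier (w' : Set X) := (hW w' w'.2).1.frontier_eq ▸ ⟨hzw', hnot⟩
      exact (hW w' w'.2).2.1.notMem_of_mem_left hfr hz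
    exact (hmin hmem (le_of_lt hlt)).not_gt hlt
  · rintro _ ⟨w, rfl⟩
    obtain ⟨u, hu, hwu⟩ := (hW w w.2).2.2
    exact ⟨u, hu, sdiff_subset.trans hwu⟩
  · rintro _ ⟨w, rfl⟩ _ ⟨w', rfl⟩ hne
    have hne' : rank w ≠ rank w' := fun h => hne (by rw [hrank h])
    exact hne'.lt_or_gt.elim trim_disjoint fun h => (trim_disjoint h).symm

theorem covDimLE_of_iUnion_isZeroDimensionalIn [HereditarilyLindelofSpace X] {n : ℕ}
    {Z : Fin (n + 1) → Set X} (hZ : ∀ i, IsZeroDimensionalIn (Z i)) (hcov : ⋃ i, Z i = univ) :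
    CovDimLE X n := by
  intro U hU hUcov
  choose V hVo hVZ hVU hVdisj using fun i =>
    exists_disjoint_refinement_of_isZeroDimensionalIn (hZ i) hU (hUcov ▸ subset_univ _)
  refine ⟨⋃ i, V i, ?_, ?_, ?_, fun x => ?_⟩
  · exact fun v hv => (mem_iUnion.1 hv).elim fun i hi => hVo i v hi
  · refine eq_univ_of_univ_subset (hcov ▸ iUnion_subset fun i => (hVZ i).trans ?_)
    exact sUnion_subset_sUnion (subset_iUnion V i)
  · exact fun v hv => (mem_iUnion.1 hv).elim fun i hi => hVU i v hi
  · have hone : ∀ i, {v ∈ V i | x ∈ v}.encard ≤ 1 := fun i =>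
      encard_le_one_iff.2 fun v v' hv hv' =>
        (hVdisj i).elim_set hv.1 hv'.1 x hv.2 hv'.2
    calc {v ∈ ⋃ i, V i | x ∈ v}.encard = (⋃ i, {v ∈ V i | x ∈ v}).encard := by
          congr 1; ext v; simp
      _ ≤ ∑ i, {v ∈ V i | x ∈ v}.encard := encard_iUnion_le_of_fintype _
      _ ≤ ∑ _i : Fin (n + 1), 1 := Finset.sum_le_sum fun i _ => hone i
      _ = n + 1 := by simp

end CoveringDimension

section PoincareMiranda

variable {ι : Type*}

section Cochains

variable [DecidableEq ι]

/-- The coboundary of a cubical cochain modulo 2 on the lattice `ι → ℕ`. The cell with least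
vertex `z` spanned by the directions in `S` is encoded as the pair `(z, S)`. -/
def cubicalCoboundary (F : (ι → ℕ) → Finset ι → ZMod 2) (z : ι → ℕ) (S : Finset ι) : ZMod 2 :=
  ∑ i ∈ S, (F (z + Pi.single i 1) (S.erase i) + F z (S.erase i))

/-- The cubical cup product of the coboundaries of the vertex functions in a list. Its value on a
cell counts, modulo 2, the monotone edge paths across the cell along whose `r`-th edge the `r`-th
function of the list changes. Only cells of dimension the length of the list are meaningful. -/
def coboundaryCup : List ((ι → ℕ) → ZMod 2) → (ι → ℕ) → Finset ι → ZMod 2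
  | [], _, _ => 1
  | s :: L, z, S =>
    ∑ i ∈ S, (s (z + Pi.single i 1) + s z) * coboundaryCup L (z + Pi.single i 1) (S.erase i)

theorem sum_sum_erase_eq_zero_of_symm (S : Finset ι) {f : ι → ι → ZMod 2}
    (hf : ∀ i j, f i j = f j i) : ∑ i ∈ S, ∑ j ∈ S.erase i, f i j = 0 := by
  rw [Finset.sum_sigma']
  refine Finset.sum_involution (fun p _ => ⟨p.2, p.1⟩) (fun p _ => ?_) (fun p hp _ hswap => ?_)
    (fun p hp => ?_) fun p _ => rfl
  · rw [hf p.1 p.2, CharTwo.add_self_eq_zero]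
  · simp only [Finset.mem_sigma, Finset.mem_erase] at hp
    exact hp.2.1 (congrArg Sigma.fst hswap)
  · simp only [Finset.mem_sigma, Finset.mem_erase] at hp ⊢
    exact ⟨hp.2.2, hp.2.1.symm, hp.1⟩

theorem cubicalCoboundary_cubicalCoboundary (F : (ι → ℕ) → Finset ι → ZMod 2) :
    cubicalCoboundary (cubicalCoboundary F) = 0 := by
  ext z S
  simp only [cubicalCoboundary, ← Finset.sum_add_distrib]
  refine sum_sum_erase_eq_zero_of_symm S fun i j => ?_
  rw [Finset.erase_right_comm, add_right_comm z]
  ring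

theorem coboundaryCup_cons_of_cubicalCoboundary_eq_zero (s : (ι → ℕ) → ZMod 2)
    {L : List ((ι → ℕ) → ZMod 2)} (hL : cubicalCoboundary (coboundaryCup L) = 0) :
    coboundaryCup (s :: L) = cubicalCoboundary fun z S => s z * coboundaryCup L z S := by
  ext z S
  have hclosed : ∑ i ∈ S, s z * (coboundaryCup L (z + Pi.single i 1) (S.erase i) +
      coboundaryCup L z (S.erase i)) = 0 := by
    rw [← Finset.mul_sum]
    exact mul_eq_zero_of_right _ (congrFun (congrFun hL z) S)
  rw [coboundaryCup, ← add_zero (∑ i ∈ S, _), ← hclosed, ← Finset.sum_add_distrib]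
  refine Finset.sum_congr rfl fun i _ => ?_
  linear_combination
    CharTwo.add_self_eq_zero (s z * coboundaryCup L (z + Pi.single i 1) (S.erase i))

theorem cubicalCoboundary_coboundaryCup (L : List ((ι → ℕ) → ZMod 2)) :
    cubicalCoboundary (coboundaryCup L) = 0 := by
  induction L with
  | nil =>
    ext z S
    exact Finset.sum_eq_zero fun i _ => CharTwo.add_self_eq_zero 1
  | cons s L ih =>
    rw [coboundaryCup_cons_of_cubicalCoboundary_eq_zero s ih, cubicalCoboundary_cubicalCoboundary]

theorem coboundaryCup_cons (s : (ι → ℕ) → ZMod 2) (L : List ((ι → ℕ) → ZMod 2)) :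
    coboundaryCup (s :: L) = cubicalCoboundary fun z S => s z * coboundaryCup L z S :=
  coboundaryCup_cons_of_cubicalCoboundary_eq_zero s (cubicalCoboundary_coboundaryCup L)

theorem exists_ne_of_coboundaryCup_ne_zero {L : List ((ι → ℕ) → ZMod 2)} {z : ι → ℕ}
    {S : Finset ι} (h : coboundaryCup L z S ≠ 0) {s : (ι → ℕ) → ZMod 2} (hs : s ∈ L) :
    ∃ w ∈ Icc z (z + ∑ i ∈ S, Pi.single i 1), ∃ w' ∈ Icc z (z + ∑ i ∈ S, Pi.single i 1),
      s w ≠ s w' := by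
  induction L generalizing z S with
  | nil => simp at hs
  | cons s' L ih =>
    obtain ⟨i, hi, hne⟩ := Finset.exists_ne_zero_of_sum_ne_zero h
    have hsplit : z + Pi.single i 1 + ∑ j ∈ S.erase i, Pi.single j 1 =
        z + ∑ j ∈ S, Pi.single j 1 := by
      rw [add_assoc, Finset.add_sum_erase S (fun j => (Pi.single j 1 : ι → ℕ)) hi]
    have hface : Icc (z + Pi.single i 1) (z + Pi.single i 1 + ∑ j ∈ S.erase i, Pi.single j 1) ⊆
        Icc z (z + ∑ j ∈ S, Pi.single j 1) :=
      Icc_subset_Icc le_self_add hsplit.le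
    rcases List.mem_cons.1 hs with rfl | hs
    · refine ⟨z + Pi.single i 1, hface ⟨le_rfl, le_self_add⟩, z, ⟨le_rfl, le_self_add⟩, ?_⟩
      exact fun heq => left_ne_zero_of_mul hne (by rw [heq, CharTwo.add_self_eq_zero])
    · obtain ⟨w, hw, w', hw', hww'⟩ := ih (right_ne_zero_of_mul hne) hs
      exact ⟨w, hface hw, w', hface hw', hww'⟩

theorem coboundaryCup_eq_zero_of_forall_eq {L : List ((ι → ℕ) → ZMod 2)} {z : ι → ℕ}
    {S : Finset ι} {i : ι} (hi : i ∉ S) {s : (ι → ℕ) → ZMod 2} (hs : s ∈ L) {c : ZMod 2}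
    (hconst : ∀ w, w i = z i → s w = c) : coboundaryCup L z S = 0 := by
  by_contra h
  have hcoord : ∀ w ∈ Icc z (z + ∑ j ∈ S, Pi.single j 1), w i = z i := by
    intro w hw
    have hzero : (∑ j ∈ S, Pi.single j 1 : ι → ℕ) i = 0 := by simp [Finset.sum_apply, hi]
    exact le_antisymm ((hw.2 i).trans_eq (by rw [Pi.add_apply, hzero, add_zero])) (hw.1 i)
  obtain ⟨w, hw, w', hw', hne⟩ := exists_ne_of_coboundaryCup_ne_zero h hs
  exact hne ((hconst w (hcoord w hw)).trans (hconst w' (hcoord w' hw')).symm)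

variable [Fintype ι]

theorem sum_piFinset_eq_sum_update (A : ι → Finset ℕ) (i : ι) (F : (ι → ℕ) → ZMod 2) :
    ∑ z ∈ Fintype.piFinset A, F z =
      ∑ t ∈ A i, ∑ z ∈ Fintype.piFinset (Function.update A i {t}), F z := by
  rw [← Finset.sum_fiberwise_of_maps_to fun z hz => Fintype.mem_piFinset.1 hz i]
  refine Finset.sum_congr rfl fun t ht => ?_
  rw [Fintype.piFinset_update_singleton_eq_filter_piFinset_eq A i ht]

theorem sum_piFinset_update_add_single (A : ι → Finset ℕ) (i : ι) (F : (ι → ℕ) → ZMod 2) (t : ℕ) :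
    ∑ z ∈ Fintype.piFinset (Function.update A i {t}), F (z + Pi.single i 1) =
      ∑ z ∈ Fintype.piFinset (Function.update A i {t + 1}), F z := by
  refine Finset.sum_nbij' (· + Pi.single i 1) (· - Pi.single i 1) ?_ ?_ ?_ ?_ fun _ _ => rfl
  · intro z hz
    simp only [Fintype.mem_piFinset] at hz ⊢
    intro k
    have hzk := hz k
    rcases eq_or_ne k i with rfl | hki
    · simpa using hzk
    · simpa [hki] using hzk
  · intro z hz
    simp only [Fintype.mem_piFinset] at hz ⊢
    intro k
    have hzk := hz k
    rcases eq_or_ne k i with rfl | hki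
    · simp_all
    · simpa [hki] using hzk
  · exact fun z _ => add_tsub_cancel_right z _
  · intro z hz
    have hzi : z i = t + 1 := by simpa using Fintype.mem_piFinset.1 hz i
    exact tsub_add_cancel_of_le (update_le_iff.2 ⟨by omega, fun k _ => Nat.zero_le (z k)⟩)

theorem sum_piFinset_add_single_add (A : ι → Finset ℕ) {i : ι} {m : ℕ}
    (hA : A i = Finset.range m) (F : (ι → ℕ) → ZMod 2) :
    ∑ z ∈ Fintype.piFinset A, (F (z + Pi.single i 1) + F z) =
      ∑ z ∈ Fintype.piFinset (Function.update A i {m}), F z +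
        ∑ z ∈ Fintype.piFinset (Function.update A i {0}), F z := by
  rw [sum_piFinset_eq_sum_update A i, hA]
  simp only [Finset.sum_add_distrib, sum_piFinset_update_add_single]
  rw [← Finset.sum_add_distrib]
  simp only [← CharTwo.sub_eq_add]
  exact Finset.sum_range_sub
    (fun t => ∑ z ∈ Fintype.piFinset (Function.update A i {t}), F z) m

theorem sum_cubicalCoboundary (A : ι → Finset ℕ) {S : Finset ι} {m : ℕ}
    (hA : ∀ i ∈ S, A i = Finset.range m) (F : (ι → ℕ) → Finset ι → ZMod 2) :
    ∑ z ∈ Fintype.piFinset A, cubicalCoboundary F z S =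
      ∑ i ∈ S, (∑ z ∈ Fintype.piFinset (Function.update A i {m}), F z (S.erase i) +
        ∑ z ∈ Fintype.piFinset (Function.update A i {0}), F z (S.erase i)) := by
  simp only [cubicalCoboundary]
  rw [Finset.sum_comm]
  exact Finset.sum_congr rfl fun i hi =>
    sum_piFinset_add_single_add A (hA i hi) fun z => F z (S.erase i)

theorem sum_coboundaryCup {m : ℕ} {s : ι → (ι → ℕ) → ZMod 2}
    (h0 : ∀ i z, z i = 0 → s i z = 0) (hm : ∀ i z, z i = m → s i z = 1) {l : List ι}
    (hl : l.Nodup) {A : ι → Finset ℕ} (hA : ∀ i ∈ l, A i = Finset.range m)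
    (hA' : ∀ i ∉ l, (A i).card = 1) :
    ∑ z ∈ Fintype.piFinset A, coboundaryCup (l.map s) z l.toFinset = 1 := by
  induction l generalizing A with
  | nil => simp [coboundaryCup, Fintype.card_piFinset, hA']
  | cons j l ih =>
    obtain ⟨hjl, hl⟩ := List.nodup_cons.1 hl
    have mem_face : ∀ {i t z}, z ∈ Fintype.piFinset (Function.update A i {t}) → z i = t := by
      intro i t z hz
      simpa using Fintype.mem_piFinset.1 hz i
    have side_face : ∀ i ∈ l, ∀ t c, (∀ z, z i = t → s i z = c) →
        ∑ z ∈ Fintype.piFinset (Function.update A i {t}),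
          s j z * coboundaryCup (l.map s) z ((j :: l).toFinset.erase i) = 0 := by
      intro i hi t c hc
      refine Finset.sum_eq_zero fun z hz => mul_eq_zero_of_right _ ?_
      exact coboundaryCup_eq_zero_of_forall_eq (Finset.notMem_erase i _) (List.mem_map_of_mem hi)
        fun w hw => hc w (hw.trans (mem_face hz))
    have bottom_face : ∑ z ∈ Fintype.piFinset (Function.update A j {0}),
        s j z * coboundaryCup (l.map s) z l.toFinset = 0 :=
      Finset.sum_eq_zero fun z hz => mul_eq_zero_of_left (h0 j z (mem_face hz)) _
    have top_face : ∑ z ∈ Fintype.piFinset (Function.update A j {m}),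
        s j z * coboundaryCup (l.map s) z l.toFinset = 1 := by
      rw [← ih hl (A := Function.update A j {m})]
      · exact Finset.sum_congr rfl fun z hz => by rw [hm j z (mem_face hz), one_mul]
      · intro i hi
        rw [Function.update_of_ne (ne_of_mem_of_not_mem hi hjl), hA i (List.mem_cons_of_mem j hi)]
      · intro i hi
        rcases eq_or_ne i j with rfl | hij
        · simp
        · rw [Function.update_of_ne hij, hA' i (by simp [hij, hi])]
    rw [List.map_cons, coboundaryCup_cons,
      sum_cubicalCoboundary A (by simpa using hA), Finset.sum_eq_single_of_mem j (by simp)]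
    · have herase : (j :: l).toFinset.erase j = l.toFinset := by simp [hjl]
      rw [herase, top_face, bottom_face, add_zero]
    · intro i hi hij
      have hil : i ∈ l := by simpa [hij] using hi
      rw [side_face i hil m 1 (hm i), side_face i hil 0 0 (h0 i), add_zero]

end Cochains

variable [Finite ι]

theorem exists_cell_forall_exists_ne {m : ℕ} {s : ι → (ι → ℕ) → ZMod 2}
    (h0 : ∀ i z, z i = 0 → s i z = 0) (hm : ∀ i z, z i = m → s i z = 1) :
    ∃ z : ι → ℕ, ∀ i, ∃ w ∈ Icc z (z + 1), ∃ w' ∈ Icc z (z + 1), s i w ≠ s i w' := by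
  classical
  cases nonempty_fintype ι
  have hsum := sum_coboundaryCup h0 hm (Finset.nodup_toList Finset.univ)
    (A := fun _ => Finset.range m) (by simp) (by simp)
  obtain ⟨z, -, hz⟩ := Finset.exists_ne_zero_of_sum_ne_zero (hsum.trans_ne one_ne_zero)
  refine ⟨z, fun i => ?_⟩
  have hcell := exists_ne_of_coboundaryCup_ne_zero hz (s := s i) (List.mem_map_of_mem (by simp))
  have hones : ∑ i : ι, (Pi.single i 1 : ι → ℕ) = 1 := Finset.univ_sum_single 1
  rwa [Finset.toList_toFinset, hones] at hcell

theorem exists_cell_forall_sign_change {m : ℕ} (hm : 0 < m) {g : ι → (ι → ℕ) → ℝ}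
    (h0 : ∀ i z, z i = 0 → 0 ≤ g i z) (h1 : ∀ i z, z i = m → g i z ≤ 0) :
    ∃ z : ι → ℕ, ∀ i, ∃ w ∈ Icc z (z + 1), ∃ w' ∈ Icc z (z + 1), 0 ≤ g i w ∧ g i w' ≤ 0 := by
  classical
  -- The clause `z i ≠ m` forces the label `1` on the face `z i = m`, where `g i` may vanish.
  let s : ι → (ι → ℕ) → ZMod 2 := fun i z => if z i ≠ m ∧ 0 ≤ g i z then 0 else 1
  have hnonneg : ∀ i w, s i w = 0 → 0 ≤ g i w := fun i w hw => by
    by_contra h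
    simp [s, h] at hw
  have hnonpos : ∀ i w, s i w = 1 → g i w ≤ 0 := fun i w hw => by
    rcases eq_or_ne (w i) m with h | h
    · exact h1 i w h
    · by_contra hpos
      simp [s, h, (not_le.1 hpos).le] at hw
  have zero_or_one : ∀ a b : ZMod 2, a ≠ b → a = 0 ∧ b = 1 ∨ b = 0 ∧ a = 1 := by decide
  obtain ⟨z, hz⟩ := exists_cell_forall_exists_ne (m := m) (s := s)
    (fun i z hz => if_pos ⟨by omega, h0 i z hz⟩) fun i z hz => if_neg (by simp [hz])
  refine ⟨z, fun i => ?_⟩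
  obtain ⟨w, hw, w', hw', hne⟩ := hz i
  rcases zero_or_one _ _ hne with ⟨h, h'⟩ | ⟨h', h⟩
  · exact ⟨w, hw, w', hw', hnonneg i w h, hnonpos i w' h'⟩
  · exact ⟨w', hw', w, hw, hnonneg i w' h', hnonpos i w h⟩

theorem exists_forall_abs_lt_of_sign_change {g : ι → (ι → I) → ℝ} (hg : ∀ i, Continuous (g i))
    (h0 : ∀ i x, x i = 0 → 0 ≤ g i x) (h1 : ∀ i x, x i = 1 → g i x ≤ 0) {ε : ℝ} (hε : 0 < ε) :
    ∃ x, ∀ i, |g i x| < ε := by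
  cases nonempty_fintype ι
  have hunif : UniformContinuous fun x i => g i x :=
    CompactSpace.uniformContinuous_of_continuous (continuous_pi hg)
  obtain ⟨δ, hδ, hgδ⟩ := Metric.uniformContinuous_iff.1 hunif ε hε
  obtain ⟨m, hm, hmδ⟩ : ∃ m : ℕ, 0 < m ∧ 1 / (m : ℝ) < δ := by
    obtain ⟨k, hk⟩ := exists_nat_one_div_lt hδ
    exact ⟨k + 1, k.succ_pos, by exact_mod_cast hk⟩
  have hm' : (0 : ℝ) < m := Nat.cast_pos.2 hm
  let grid (z : ι → ℕ) : ι → I := fun i => projIcc 0 1 zero_le_one ((z i : ℝ) / m)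
  obtain ⟨z, hz⟩ := exists_cell_forall_sign_change hm (g := fun i z => g i (grid z))
    (fun i z hz => h0 i _ (by simp [grid, hz]))
    fun i z hz => h1 i _ (by simp [grid, hz, div_self hm'.ne'])
  have hclose : ∀ i, ∀ w ∈ Icc z (z + 1), |g i (grid w) - g i (grid z)| < ε := by
    intro i w hw
    refine (dist_le_pi_dist (fun i => g i (grid w)) (fun i => g i (grid z)) i).trans_lt (hgδ ?_)
    refine (dist_pi_lt_iff hδ).2 fun j => ((abs_projIcc_sub_projIcc _).trans ?_).trans_lt hmδ
    have hlow : (z j : ℝ) ≤ w j := Nat.cast_le.2 (hw.1 j)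
    have hupp : (w j : ℝ) ≤ z j + 1 := by exact_mod_cast hw.2 j
    rw [← sub_div, abs_of_nonneg (div_nonneg (sub_nonneg.2 hlow) hm'.le)]
    gcongr
    linarith
  refine ⟨grid z, fun i => abs_lt.2 ?_⟩
  obtain ⟨w, hw, w', hw', hnonneg, hnonpos⟩ := hz i
  have hclose_w := abs_lt.1 (hclose i w hw)
  have hclose_w' := abs_lt.1 (hclose i w' hw')
  exact ⟨by linarith, by linarith⟩

theorem poincare_miranda {g : ι → (ι → I) → ℝ} (hg : ∀ i, Continuous (g i))
    (h0 : ∀ i x, x i = 0 → 0 ≤ g i x) (h1 : ∀ i x, x i = 1 → g i x ≤ 0) :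
    ∃ x, ∀ i, g i x = 0 := by
  cases nonempty_fintype ι
  obtain ⟨x, -, hmin⟩ :=
    isCompact_univ.exists_isMinOn univ_nonempty (continuous_pi hg).norm.continuousOn
  have hnorm : ‖fun i => g i x‖ = 0 := by
    by_contra hne
    have hpos : 0 < ‖fun i => g i x‖ := (norm_nonneg _).lt_of_ne' hne
    obtain ⟨y, hy⟩ := exists_forall_abs_lt_of_sign_change hg h0 h1 hpos
    exact ((pi_norm_lt_iff hpos).2 hy).not_ge (hmin (mem_univ y))
  exact ⟨x, congrFun (norm_eq_zero.1 hnorm)⟩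

end PoincareMiranda

section CubeDimension

theorem exists_forall_mem_of_avoid_opposite_faces {N : ℕ} {G : Fin (N + 1) → Set (Fin N → I)}
    (hG : ∀ j, IsOpen (G j)) (hcov : ⋃ j, G j = univ) (h0 : ∀ i x, x i = 0 → x ∉ G i.succ)
    (h1 : ∀ i x, x i = 1 → x ∉ G i.castSucc) : ∃ x, ∀ j, x ∈ G j := by
  obtain ⟨φ, hφ⟩ := PartitionOfUnity.exists_isSubordinate isClosed_univ G hG hcov.ge
  have hφ_zero : ∀ {j x}, x ∉ G j → φ j x = 0 := fun {j x} hx =>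
    image_eq_zero_of_notMem_tsupport fun h => hx (hφ j h)
  obtain ⟨x, hx⟩ := poincare_miranda (g := fun (i : Fin N) x => φ i.castSucc x - φ i.succ x)
    (fun i => (φ i.castSucc).continuous.sub (φ i.succ).continuous)
    (fun i x hxi => by simpa [hφ_zero (h0 i x hxi)] using φ.nonneg i.castSucc x)
    (fun i x hxi => by simpa [hφ_zero (h1 i x hxi)] using φ.nonneg i.succ x)
  have hequal : ∀ j, φ j x = φ 0 x := fun j => by
    induction j using Fin.induction with
    | zero => rfl
    | succ i ih => rw [← ih, sub_eq_zero.1 (hx i)]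
  refine ⟨x, fun j => by_contra fun hj => zero_ne_one (α := ℝ) ?_⟩
  have hzero : ∀ k, φ k x = 0 := fun k => by rw [hequal, ← hequal j, hφ_zero hj]
  simpa [hzero] using φ.sum_eq_one (mem_univ x)

theorem exists_fin_first_failure {N : ℕ} (P : Fin N → Prop) :
    ∃ j : Fin (N + 1), (∀ i, i.succ = j → P i) ∧ ∀ i, i.castSucc = j → ¬ P i := by
  induction N with
  | zero => exact ⟨0, fun i => i.elim0, fun i => i.elim0⟩
  | succ N ih =>
    by_cases h0 : P 0
    · obtain ⟨j, hsucc, hcastSucc⟩ := ih fun i => P i.succ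
      refine ⟨j.succ, fun i hi => ?_, fun i hi => ?_⟩
      · cases i using Fin.cases with
        | zero => exact h0
        | succ i => exact hsucc i (Fin.succ_injective _ hi)
      · cases i using Fin.cases with
        | zero => exact absurd hi (Fin.succ_ne_zero j).symm
        | succ i => exact hcastSucc i (Fin.succ_injective _ hi)
    · refine ⟨0, fun i hi => absurd hi (Fin.succ_ne_zero i), fun i hi => ?_⟩
      rwa [Fin.castSucc_eq_zero_iff.1 hi]

/-- A set of points of a cube joins opposite faces if some coordinate takes on it both the
value `0` and the value `1`. -/
def JoinsOppositeFaces {ι : Type*} (v : Set (ι → I)) : Prop :=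
  ∃ i, (∃ x ∈ v, x i = 0) ∧ ∃ x ∈ v, x i = 1

theorem exists_le_encard_of_not_joinsOppositeFaces {N : ℕ} {V : Set (Set (Fin N → I))}
    (hV : ∀ v ∈ V, IsOpen v) (hcov : ⋃₀ V = univ) (hfaces : ∀ v ∈ V, ¬ JoinsOppositeFaces v) :
    ∃ x, (N : ℕ∞) + 1 ≤ {v ∈ V | x ∈ v}.encard := by
  choose label hlabel_succ hlabel_castSucc using fun v : Set (Fin N → I) =>
    exists_fin_first_failure fun i => ∀ x ∈ v, x i ≠ 0
  obtain ⟨x, hx⟩ := exists_forall_mem_of_avoid_opposite_faces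
    (G := fun j => ⋃₀ {v ∈ V | label v = j}) (fun j => isOpen_sUnion fun v hv => hV v hv.1)
    (by
      refine eq_univ_of_forall fun x => ?_
      obtain ⟨v, hv, hxv⟩ := hcov.ge (mem_univ x)
      exact mem_iUnion.2 ⟨label v, v, ⟨hv, rfl⟩, hxv⟩)
    (by
      rintro i x hxi ⟨v, ⟨-, hlabel⟩, hxv⟩
      exact hlabel_succ v i hlabel.symm x hxv hxi)
    (by
      rintro i x hxi ⟨v, ⟨hv, hlabel⟩, hxv⟩
      have hmeets := hlabel_castSucc v i hlabel.symm
      push Not at hmeets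
      exact hfaces v hv ⟨i, hmeets, x, hxv, hxi⟩)
  choose v hv hxv using hx
  have hinj : Function.Injective v := fun j k hjk => by rw [← (hv j).2, ← (hv k).2, hjk]
  refine ⟨x, ?_⟩
  calc (N : ℕ∞) + 1 = ENat.card (Fin (N + 1)) := by simp
    _ ≤ (range v).encard := hinj.encard_range
    _ ≤ {v ∈ V | x ∈ v}.encard :=
      encard_le_encard (range_subset_iff.2 fun j => ⟨(hv j).1, hxv j⟩)

theorem not_joinsOppositeFaces_of_subset_ball {ι : Type*} [Fintype ι] {v : Set (ι → I)}
    {x : ι → I} (hv : v ⊆ Metric.ball x (1 / 2)) : ¬ JoinsOppositeFaces v := by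
  rintro ⟨i, ⟨y, hy, hyi⟩, z, hz, hzi⟩
  have hyx := (dist_le_pi_dist y x i).trans_lt (hv hy)
  have hxz := (dist_le_pi_dist x z i).trans_lt (Metric.mem_ball'.1 (hv hz))
  have hone : dist (0 : I) 1 = 1 := by simp [Subtype.dist_eq]
  have htriangle := dist_triangle (y i) (x i) (z i)
  rw [hyi, hzi, hone] at htriangle
  rw [hyi] at hyx
  rw [hzi] at hxz
  linarith

theorem not_covDimLE_fin_cube {N k : ℕ} (hk : k < N) : ¬ CovDimLE (Fin N → I) k := by
  intro hdim
  obtain ⟨V, hVo, hVcov, hVU, hVk⟩ := hdim (range fun x => Metric.ball x (1 / 2))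
    (forall_mem_range.2 fun x => Metric.isOpen_ball)
    (eq_univ_of_forall fun x => ⟨_, mem_range_self x, Metric.mem_ball_self one_half_pos⟩)
  obtain ⟨x, hx⟩ := exists_le_encard_of_not_joinsOppositeFaces hVo hVcov fun v hv => by
    obtain ⟨_, ⟨x, rfl⟩, hvx⟩ := hVU v hv
    exact not_joinsOppositeFaces_of_subset_ball hvx
  have hle : (N : ℕ∞) + 1 ≤ k + 1 := hx.trans (hVk x)
  have hle' : N + 1 ≤ k + 1 := by exact_mod_cast hle
  omega

theorem not_covDimLE_cube {ι : Type*} [Finite ι] {k : ℕ} (hk : k < Nat.card ι) :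
    ¬ CovDimLE (ι → I) k := fun hdim =>
  not_covDimLE_fin_cube hk <| covDimLE_of_isClosedEmbedding
    (Homeomorph.piCongrLeft (Y := fun _ => I) (Finite.equivFin ι).symm).isClosedEmbedding hdim

end CubeDimension

section UpperBound

theorem exists_approx_of_ghDist_lt {X Y : Type*} [MetricSpace X] [CompactSpace X] [Nonempty X]
    [MetricSpace Y] [CompactSpace Y] [Nonempty Y] {r : ℝ} (h : ghDist X Y < r) :
    ∃ g : X → Y, (∀ a b, |dist (g a) (g b) - dist a b| < 2 * r) ∧
      ∀ c, ∃ a, dist (g a) c < 2 * r := by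
  obtain ⟨Φ, Ψ, hΦ, hΨ, hdist⟩ := ghDist_eq_hausdorffDist X Y
  rw [hdist] at h
  have hfin : Metric.hausdorffEDist (range Φ) (range Ψ) ≠ ⊤ :=
    Metric.hausdorffEDist_ne_top_of_nonempty_of_bounded (range_nonempty _) (range_nonempty _)
      (isCompact_range hΦ.continuous).isBounded (isCompact_range hΨ.continuous).isBounded
  have hleft : ∀ a, ∃ b, dist (Φ a) (Ψ b) < r := fun a => by
    simpa using Metric.exists_dist_lt_of_hausdorffDist_lt (mem_range_self a) h hfin
  have hright : ∀ b, ∃ a, dist (Φ a) (Ψ b) < r := fun b => by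
    simpa using Metric.exists_dist_lt_of_hausdorffDist_lt' (mem_range_self b) h hfin
  choose g hg using hleft
  refine ⟨g, fun a b => ?_, fun c => ?_⟩
  · rw [← hΦ.dist_eq a b, ← hΨ.dist_eq, ← Real.dist_eq]
    refine (dist_dist_dist_le _ _ _ _).trans_lt ?_
    rw [dist_comm _ (Φ a), dist_comm _ (Φ b), two_mul]
    exact add_lt_add (hg a) (hg b)
  · obtain ⟨a, ha⟩ := hright c
    refine ⟨a, ?_⟩
    rw [← hΨ.dist_eq, two_mul]
    exact (dist_triangle_left _ _ (Φ a)).trans_lt (add_lt_add (hg a) ha)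

theorem ghDist_le_of_surjective {X Y : Type*} [MetricSpace X] [CompactSpace X] [Nonempty X]
    [MetricSpace Y] [CompactSpace Y] [Nonempty Y] {f : X → Y} (hf : Function.Surjective f) {ε : ℝ}
    (h : ∀ a b, |dist a b - dist (f a) (f b)| ≤ ε) : ghDist X Y ≤ ε / 2 := by
  simpa using ghDist_le_of_approx_subsets (s := univ) (fun x => f x) (ε₁ := 0) (ε₃ := 0)
    (fun x => ⟨x, mem_univ x, (dist_self x).le⟩)
    (fun y => (hf y).imp' (⟨·, mem_univ _⟩) fun x hx => by rw [hx, dist_self])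
    fun x y => h x y

theorem exists_pos_forall_le {ι : Type*} [Finite ι] {d : ι → ℝ} (hd : ∀ i, 0 < d i) :
    ∃ δ > 0, ∀ i, δ ≤ d i := by
  rcases isEmpty_or_nonempty ι with h | h
  · exact ⟨1, one_pos, isEmptyElim⟩
  · obtain ⟨i, hi⟩ := Finite.exists_min d
    exact ⟨d i, hd i, hi⟩

section DistBox

variable {Y : Type*}

/-- The metric spaces that admit a surjection onto `Y` for which the distance between any points
over `y` and `y'` belongs to `D y y'`. When `Y` is a finite metric space and `D y y'` is a small
neighbourhood of `dist y y'`, this is a neighbourhood of the class of `Y`. -/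
def distBox (D : Y → Y → Set ℝ) : Set GHSpace :=
  {p | ∃ f : p.Rep → Y, Function.Surjective f ∧ ∀ a b, dist a b ∈ D (f a) (f b)}

theorem surjective_comp_of_dist_lt {X Z : Type*} [PseudoMetricSpace Z] {D : Y → Y → Set ℝ}
    {e : ℝ} (hsep : ∀ y y', y ≠ y' → D y y' ⊆ Ici e) {f : Z → Y} (hf : Function.Surjective f)
    (hfD : ∀ a b, dist a b ∈ D (f a) (f b)) {g : X → Z} (hg : ∀ c, ∃ a, dist (g a) c < e) :
    Function.Surjective (f ∘ g) := by
  intro y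
  obtain ⟨c, rfl⟩ := hf y
  obtain ⟨a, ha⟩ := hg c
  exact ⟨a, by_contra fun hne => (hsep _ _ hne (hfD (g a) c)).not_gt ha⟩

variable {S : Set GHSpace} {D : Y → Y → Set ℝ} {e : ℝ}

theorem isOpen_preimage_distBox (hS : ∀ p ∈ S, Finite p.Rep) (he : 0 < e)
    (hsep : ∀ y y', y ≠ y' → D y y' ⊆ Ici e) (hD : ∀ y y', IsOpen (D y y')) :
    IsOpen ((↑) ⁻¹' distBox D : Set S) := by
  refine Metric.isOpen_iff.2 fun p ⟨f, hf, hfD⟩ => ?_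
  have := hS p p.2
  choose r hr hball using fun ab : (p : GHSpace).Rep × (p : GHSpace).Rep =>
    Metric.isOpen_iff.1 (hD (f ab.1) (f ab.2)) _ (hfD ab.1 ab.2)
  obtain ⟨δ, hδ, hδr⟩ := exists_pos_forall_le fun ab => lt_min he (hr ab)
  refine ⟨δ / 2, half_pos hδ, fun p' hp' => ?_⟩
  obtain ⟨g, hgdist, hgdense⟩ :=
    exists_approx_of_ghDist_lt ((dist_ghDist (p' : GHSpace) p).symm.trans_lt hp')
  rw [mul_div_cancel₀ δ two_ne_zero] at hgdist hgdense
  refine ⟨f ∘ g, surjective_comp_of_dist_lt hsep hf hfD fun c => ?_, fun a b => hball (g a, g b) ?_⟩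
  · obtain ⟨a, ha⟩ := hgdense c
    exact ⟨a, ha.trans_le ((hδr (c, c)).trans (min_le_left _ _))⟩
  · exact Metric.mem_ball'.2 ((hgdist a b).trans_le ((hδr _).trans (min_le_right _ _)))

theorem isClosed_preimage_distBox [Finite Y] (hS : ∀ p ∈ S, Finite p.Rep) (he : 0 < e)
    (hsep : ∀ y y', y ≠ y' → D y y' ⊆ Ici e) (hD : ∀ y y', IsClosed (D y y')) :
    IsClosed ((↑) ⁻¹' distBox D : Set S) := by
  refine isOpen_compl_iff.1 (Metric.isOpen_iff.2 fun p hp => ?_)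
  have := hS p p.2
  have hfail : ∀ f : {f : (p : GHSpace).Rep → Y // Function.Surjective f},
      ∃ a b, dist a b ∉ D (f.1 a) (f.1 b) := by
    rintro ⟨f, hf⟩
    by_contra! h
    exact hp ⟨f, hf, h⟩
  choose a b hab using hfail
  choose r hr hball using fun f =>
    Metric.isOpen_iff.1 (hD (f.1 (a f)) (f.1 (b f))).isOpen_compl _ (hab f)
  obtain ⟨δ, hδ, hδr⟩ := exists_pos_forall_le hr
  refine ⟨min e δ / 2, half_pos (lt_min he hδ), fun p' hp' => ?_⟩
  rintro ⟨f, hf, hfD⟩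
  obtain ⟨g, hgdist, hgdense⟩ := exists_approx_of_ghDist_lt
    ((dist_ghDist (p : GHSpace) p').symm.trans_lt (Metric.mem_ball'.1 hp'))
  rw [mul_div_cancel₀ _ two_ne_zero] at hgdist hgdense
  let fg : {f : (p : GHSpace).Rep → Y // Function.Surjective f} :=
    ⟨f ∘ g, surjective_comp_of_dist_lt hsep hf hfD fun c =>
      (hgdense c).imp fun a ha => ha.trans_le (min_le_left _ _)⟩
  exact hball fg ((hgdist _ _).trans_le ((min_le_right _ _).trans (hδr fg))) (hfD _ _)

end DistBox

/-- The edges of the complete graph on `V`, that is, the unordered pairs of distinct vertices. -/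
abbrev CompleteEdge (V : Type*) : Type _ := {s : Sym2 V // ¬ s.IsDiag}

theorem card_completeEdge (V : Type*) [Finite V] :
    Nat.card (CompleteEdge V) = (Nat.card V).choose 2 := by
  classical
  cases nonempty_fintype V
  rw [Nat.card_eq_fintype_card, Sym2.card_subtype_not_diag, Nat.card_eq_fintype_card]

/-- The set of distances between distinct points of `X`. -/
def nonzeroDistances (X : Type*) [MetricSpace X] : Set ℝ :=
  {d | ∃ a b : X, a ≠ b ∧ dist a b = d}

theorem finite_nonzeroDistances (X : Type*) [MetricSpace X] [Finite X] :
    (nonzeroDistances X).Finite :=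
  (finite_range fun ab : X × X => dist ab.1 ab.2).subset <| by
    rintro _ ⟨a, b, -, rfl⟩
    exact ⟨(a, b), rfl⟩

theorem ncard_nonzeroDistances_le (X : Type*) [MetricSpace X] [Finite X] :
    (nonzeroDistances X).ncard ≤ (Nat.card X).choose 2 := by
  let edgeLength (s : CompleteEdge X) : ℝ := Sym2.lift ⟨dist, dist_comm⟩ s.1
  have hsub : nonzeroDistances X ⊆ edgeLength '' univ := by
    rintro _ ⟨a, b, hab, rfl⟩
    exact ⟨⟨s(a, b), hab⟩, mem_univ _, rfl⟩
  calc (nonzeroDistances X).ncard ≤ (edgeLength '' univ).ncard := ncard_le_ncard hsub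
    _ ≤ (univ : Set (CompleteEdge X)).ncard := ncard_image_le
    _ = (Nat.card X).choose 2 := by rw [ncard_univ, card_completeEdge]

theorem exists_isOpen_subset_ball_frontier_subset_of_dense {T : Set ℝ} (hT : Dense T) (d : ℝ)
    {ε : ℝ} (hε : 0 < ε) : ∃ U, IsOpen U ∧ d ∈ U ∧ U ⊆ Metric.ball d ε ∧ frontier U ⊆ T := by
  obtain ⟨lo, hlo, hlo_gt, hlo_lt⟩ := hT.exists_between (sub_lt_self d hε)
  obtain ⟨hi, hhi, hhi_gt, hhi_lt⟩ := hT.exists_between (lt_add_of_pos_right d hε)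
  refine ⟨Ioo lo hi, isOpen_Ioo, ⟨hlo_lt, hhi_gt⟩, ?_, ?_⟩
  · rw [Real.ball_eq_Ioo]
    exact Ioo_subset_Ioo hlo_gt.le hhi_lt.le
  · rw [frontier_Ioo (hlo_lt.trans hhi_gt)]
    exact pair_subset hlo hhi

theorem exists_separated_isOpen_frontier_subset_of_dense (Y : Type*) [MetricSpace Y] [Finite Y]
    {T : Set ℝ} (hT : Dense T) {ε : ℝ} (hε : 0 < ε) :
    ∃ (U : Y → Y → Set ℝ) (e : ℝ), (∀ y y', IsOpen (U y y')) ∧ (∀ y y', dist y y' ∈ U y y') ∧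
      (∀ y y', U y y' ⊆ Metric.ball (dist y y') ε) ∧ (∀ y y', frontier (U y y') ⊆ T) ∧
      0 < e ∧ ∀ y y', y ≠ y' → closure (U y y') ⊆ Ici e := by
  obtain ⟨e, he, hele⟩ := exists_pos_forall_le
    (d := fun yy : {yy : Y × Y // yy.1 ≠ yy.2} => dist yy.1.1 yy.1.2 / 2)
    fun yy => half_pos (dist_pos.2 yy.2)
  choose U hUo hdist hUball hUT using fun y y' : Y =>
    exists_isOpen_subset_ball_frontier_subset_of_dense hT (dist y y') (lt_min hε he)
  refine ⟨U, e, hUo, hdist, fun y y' => ?_, hUT, he, fun y y' hne => ?_⟩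
  · exact (hUball y y').trans (Metric.ball_subset_ball (min_le_left _ _))
  · refine closure_minimal (fun d hd => ?_) isClosed_Ici
    have hde : dist d (dist y y') < e := (hUball y y' hd).trans_le (min_le_right _ _)
    have hedist : e ≤ dist y y' / 2 := hele ⟨(y, y'), hne⟩
    exact mem_Ici.2 (by linarith [(abs_lt.1 hde).1])

theorem disjoint_frontier_preimage_distBox {Y : Type*} [Finite Y] {S : Set GHSpace}
    (hS : ∀ p ∈ S, Finite p.Rep) {T : Set ℝ} {U : Y → Y → Set ℝ} {e : ℝ}
    (he : 0 < e) (hU : ∀ y y', IsOpen (U y y')) (hzero : ∀ y, 0 ∈ U y y)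
    (hUT : ∀ y y', frontier (U y y') ⊆ T) (hsep : ∀ y y', y ≠ y' → closure (U y y') ⊆ Ici e) :
    Disjoint (frontier ((↑) ⁻¹' distBox U : Set S))
      {p : S | Disjoint (nonzeroDistances (p : GHSpace).Rep) T} := by
  have hopen : IsOpen ((↑) ⁻¹' distBox U : Set S) :=
    isOpen_preimage_distBox hS he (fun y y' h => subset_closure.trans (hsep y y' h)) hU
  have hclosure : closure ((↑) ⁻¹' distBox U : Set S) ⊆
      (↑) ⁻¹' distBox fun y y' => closure (U y y') := by
    refine closure_minimal ?_ (isClosed_preimage_distBox hS he hsep fun y y' => isClosed_closure)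
    exact fun p ⟨f, hf, hfU⟩ => ⟨f, hf, fun a b => subset_closure (hfU a b)⟩
  rw [hopen.frontier_eq]
  refine disjoint_left.2 fun p hp hpT => hp.2 ?_
  obtain ⟨f, hf, hfU⟩ := hclosure hp.1
  refine ⟨f, hf, fun a b => ?_⟩
  rcases eq_or_ne a b with rfl | hab
  · rw [dist_self]
    exact hzero (f a)
  · by_contra hnot
    have hfr : dist a b ∈ frontier (U (f a) (f b)) := (hU _ _).frontier_eq ▸ ⟨hfU a b, hnot⟩
    exact hpT.notMem_of_mem_left ⟨a, b, hab, rfl⟩ (hUT _ _ hfr)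

theorem isZeroDimensionalIn_disjoint_nonzeroDistances {S : Set GHSpace}
    (hS : ∀ p ∈ S, Finite p.Rep) {T : Set ℝ} (hT : Dense T) :
    IsZeroDimensionalIn {p : S | Disjoint (nonzeroDistances (p : GHSpace).Rep) T} := by
  intro p _ O hO
  have := hS p p.2
  obtain ⟨ε, hε, hballO⟩ := Metric.mem_nhds_iff.1 hO
  obtain ⟨U, e, hUo, hdist, hUball, hUT, he, hsep⟩ :=
    exists_separated_isOpen_frontier_subset_of_dense (p : GHSpace).Rep hT hε
  refine ⟨(↑) ⁻¹' distBox U, ?_, ?_, fun q hq => hballO ?_, ?_⟩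
  · exact isOpen_preimage_distBox hS he (fun y y' h => subset_closure.trans (hsep y y' h)) hUo
  · exact ⟨id, Function.surjective_id, hdist⟩
  · obtain ⟨f, hf, hfU⟩ := hq
    have happrox : ∀ a b, |dist a b - dist (f a) (f b)| ≤ ε := fun a b =>
      (Metric.mem_ball.1 (hUball _ _ (hfU a b))).le
    rw [Metric.mem_ball, Subtype.dist_eq, dist_ghDist]
    exact (ghDist_le_of_surjective hf happrox).trans_lt (half_lt_self hε)
  · exact disjoint_frontier_preimage_distBox hS he hUo (fun y => dist_self y ▸ hdist y y) hUT hsep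

theorem exists_dense_pairwise_disjoint :
    ∃ T : ℕ → Set ℝ, (∀ i, Dense (T i)) ∧ Pairwise fun i j => Disjoint (T i) (T j) := by
  refine ⟨fun i => range fun r : ℚ => r + i * √2, fun i => ?_, fun i j hij => ?_⟩
  · exact (Homeomorph.addRight (i * √2)).surjective.denseRange.comp Rat.denseRange_cast
      (Homeomorph.addRight _).continuous
  · refine disjoint_left.2 ?_
    rintro _ ⟨r, rfl⟩ ⟨r', hr'⟩
    have hne : ((j : ℤ) - i : ℤ) ≠ 0 := by omega
    have hirr := irrational_sqrt_two.intCast_mul hne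
    refine hirr ⟨r - r', ?_⟩
    push_cast
    linarith

theorem exists_disjoint_of_ncard_lt {ι α : Type*} {A : Set α} (hA : A.Finite)
    {T : ι → Set α} (hT : Pairwise fun i j => Disjoint (T i) (T j)) (hcard : A.ncard < Nat.card ι) :
    ∃ i, Disjoint A (T i) := by
  by_contra! h
  choose t htA htT using fun i => not_disjoint_iff.1 (h i)
  have hinj : Function.Injective fun i => (⟨t i, htA i⟩ : A) := fun i j hij => by
    have heq : t i = t j := congrArg Subtype.val hij
    by_contra hne
    exact (hT hne).notMem_of_mem_left (htT i) (heq ▸ htT j)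
  have := hA.to_subtype
  exact hcard.not_ge (Nat.card_le_card_of_injective _ hinj)

theorem covDimLE_choose_two_of_card_rep_le {n : ℕ} {S : Set GHSpace}
    (hS : ∀ p ∈ S, Finite p.Rep ∧ Nat.card p.Rep ≤ n) : CovDimLE S (n.choose 2) := by
  obtain ⟨T, hTdense, hTdisj⟩ := exists_dense_pairwise_disjoint
  refine covDimLE_of_iUnion_isZeroDimensionalIn
    (Z := fun i => {p : S | Disjoint (nonzeroDistances (p : GHSpace).Rep) (T i)})
    (fun i => isZeroDimensionalIn_disjoint_nonzeroDistances (fun p hp => (hS p hp).1) (hTdense i))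
    (eq_univ_of_forall fun p => mem_iUnion.2 ?_)
  obtain ⟨hfin, hcard⟩ := hS p p.2
  refine exists_disjoint_of_ncard_lt (finite_nonzeroDistances _)
    (hTdisj.comp_of_injective Fin.val_injective) ?_
  calc (nonzeroDistances (p : GHSpace).Rep).ncard ≤ (Nat.card (p : GHSpace).Rep).choose 2 :=
        ncard_nonzeroDistances_le _
    _ ≤ n.choose 2 := Nat.choose_le_choose 2 hcard
    _ < Nat.card (Fin (n.choose 2 + 1)) := by simp

end UpperBound

section LowerBound

/-- A copy of the vertex set `V`, metrized so that the distance between two distinct vertices is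
the weight `w` of the edge joining them. The triangle inequality holds for all weights in
`[1, 2]`. -/
@[ext]
structure EdgeWeighted {V : Type*} (w : CompleteEdge V → Icc (1 : ℝ) 2) where
  /-- The underlying vertex. -/
  vertex : V

namespace EdgeWeighted

variable {V : Type*} {w : CompleteEdge V → Icc (1 : ℝ) 2}

/-- The identification of the points of `EdgeWeighted w` with the vertices. -/
def vertexEquiv (w : CompleteEdge V → Icc (1 : ℝ) 2) : EdgeWeighted w ≃ V where
  toFun := vertex
  invFun := mk

instance [Finite V] : Finite (EdgeWeighted w) := .of_equiv V (vertexEquiv w).symm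

instance [Nonempty V] : Nonempty (EdgeWeighted w) := (vertexEquiv w).nonempty

theorem not_isDiag_of_ne {i j : EdgeWeighted w} (h : i ≠ j) : ¬ s(i.vertex, j.vertex).IsDiag :=
  fun hdiag => h (EdgeWeighted.ext hdiag)

open Classical in
noncomputable instance : Dist (EdgeWeighted w) where
  dist i j := if h : i = j then 0 else w ⟨s(i.vertex, j.vertex), not_isDiag_of_ne h⟩

theorem dist_of_ne {i j : EdgeWeighted w} (h : i ≠ j) :
    dist i j = w ⟨s(i.vertex, j.vertex), not_isDiag_of_ne h⟩ :=
  dif_neg h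

noncomputable instance : MetricSpace (EdgeWeighted w) where
  dist_self i := dif_pos rfl
  dist_comm i j := by
    rcases eq_or_ne i j with rfl | h
    · rfl
    · simp only [dist_of_ne h, dist_of_ne h.symm, Sym2.eq_swap]
  dist_triangle i j k := by
    have hself : ∀ i : EdgeWeighted w, dist i i = 0 := fun i => dif_pos rfl
    have hmem : ∀ {i j : EdgeWeighted w}, i ≠ j → dist i j ∈ Icc (1 : ℝ) 2 := fun h => by
      rw [dist_of_ne h]
      exact Subtype.prop _
    rcases eq_or_ne i j with rfl | hij
    · rw [hself, zero_add]
    rcases eq_or_ne j k with rfl | hjk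
    · rw [hself, add_zero]
    rcases eq_or_ne i k with rfl | hik
    · rw [hself]
      linarith [(hmem hij).1, (hmem hjk).1]
    · linarith [(hmem hij).1, (hmem hjk).1, (hmem hik).2]
  eq_of_dist_eq_zero {i j} h := by
    by_contra hne
    rw [dist_of_ne hne] at h
    linarith [(w ⟨_, not_isDiag_of_ne hne⟩).2.1]

end EdgeWeighted

theorem continuous_toGHSpace_edgeWeighted (V : Type*) [Finite V] [Nonempty V] :
    Continuous fun w : CompleteEdge V → Icc (1 : ℝ) 2 => toGHSpace (EdgeWeighted w) := by
  cases nonempty_fintype (CompleteEdge V)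
  refine (LipschitzWith.mk_one fun w w' => ?_).continuous
  let relabel : EdgeWeighted w ≃ EdgeWeighted w' :=
    (EdgeWeighted.vertexEquiv w).trans (EdgeWeighted.vertexEquiv w').symm
  have happrox : ∀ i j, |dist i j - dist (relabel i) (relabel j)| ≤ dist w w' := by
    intro i j
    rcases eq_or_ne i j with rfl | hij
    · simp
    · rw [EdgeWeighted.dist_of_ne hij, EdgeWeighted.dist_of_ne (relabel.injective.ne hij)]
      exact dist_le_pi_dist w w' _
  calc dist (toGHSpace (EdgeWeighted w)) (toGHSpace (EdgeWeighted w'))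
      = ghDist (EdgeWeighted w) (EdgeWeighted w') := rfl
    _ ≤ dist w w' / 2 := ghDist_le_of_surjective relabel.surjective happrox
    _ ≤ dist w w' := half_le_self dist_nonneg

theorem exists_continuous_uncurry_injective (ι : Type*) [Countable ι] :
    ∃ c : ι → I → Icc (1 : ℝ) 2,
      (∀ i, Continuous (c i)) ∧ Function.Injective (Function.uncurry c) := by
  obtain ⟨ℓ, hℓ⟩ := exists_injective_nat ι
  -- The integer part of `ℓ i + t / 2` determines `i`, and then its fractional part determines `t`.
  let slot (i : ι) (t : I) : ℝ := 1 + (ℓ i + t / 2)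
  have hslot : ∀ i t, 1 ≤ slot i t := fun i t => by
    have := t.2.1
    simp only [slot, le_add_iff_nonneg_right]
    positivity
  have hslot_inj : ∀ {i t j u}, slot i t = slot j u → (i, t) = (j, u) := by
    intro i t j u h
    have hsum : (ℓ i : ℝ) + t / 2 = ℓ j + u / 2 := add_left_cancel h
    have hij : ℓ i = ℓ j := by
      have hlt : (ℓ i : ℝ) < ℓ j + 1 := by linarith [t.2.1, u.2.2]
      have hgt : (ℓ j : ℝ) < ℓ i + 1 := by linarith [t.2.2, u.2.1]
      norm_cast at hlt hgt
      omega
    rw [hij] at hsum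
    exact Prod.ext (hℓ hij) (Subtype.ext (by linarith))
  refine ⟨fun i t => ⟨1 + (slot i t)⁻¹, ?_, ?_⟩, fun i => ?_, fun p q h => ?_⟩
  · exact le_add_of_nonneg_right (inv_nonneg.2 (zero_le_one.trans (hslot i t)))
  · linarith [inv_le_one_of_one_le₀ (hslot i t)]
  · have hcont : Continuous (slot i) := by fun_prop
    have hinv := hcont.inv₀ fun t => (one_pos.trans_le (hslot i t)).ne'
    exact (continuous_const.add hinv).subtype_mk _
  · exact hslot_inj (inv_injective (add_left_cancel (congrArg Subtype.val h)))

theorem eq_of_toGHSpace_edgeWeighted_eq {V : Type*} [Finite V] [Nonempty V]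
    {c : CompleteEdge V → I → Icc (1 : ℝ) 2} (hc : Function.Injective (Function.uncurry c))
    {x y : CompleteEdge V → I}
    (h : toGHSpace (EdgeWeighted fun s => c s (x s)) =
      toGHSpace (EdgeWeighted fun s => c s (y s))) : x = y := by
  obtain ⟨e⟩ := toGHSpace_eq_toGHSpace_iff_isometryEquiv.1 h
  ext1 ⟨s, hs⟩
  induction s using Sym2.ind with
  | _ i j =>
    have hij : EdgeWeighted.mk (w := fun s => c s (x s)) i ≠ ⟨j⟩ := fun h =>
      hs (congrArg EdgeWeighted.vertex h)
    have hweight := e.dist_eq ⟨i⟩ ⟨j⟩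
    rw [EdgeWeighted.dist_of_ne hij, EdgeWeighted.dist_of_ne (e.injective.ne hij)] at hweight
    obtain ⟨hs, ht⟩ := Prod.ext_iff.1 (@hc (_, _) (_, _) (Subtype.ext hweight))
    exact ht.symm.trans (congrArg y hs)

theorem nonempty_rep_toGHSpace_isometryEquiv (X : Type*) [MetricSpace X] [CompactSpace X]
    [Nonempty X] : Nonempty ((toGHSpace X).Rep ≃ᵢ X) :=
  toGHSpace_eq_toGHSpace_iff_isometryEquiv.1 (GHSpace.toGHSpace_rep (toGHSpace X))

theorem not_covDimLE_of_lt_choose_two {n k : ℕ} {S : Set GHSpace}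
    (hS : ∀ p : GHSpace, Finite p.Rep → Nat.card p.Rep = n → p ∈ S) (hk : k < n.choose 2) :
    ¬ CovDimLE S k := by
  have : NeZero n := ⟨by rintro rfl; simp at hk⟩
  obtain ⟨c, hc, hcinj⟩ := exists_continuous_uncurry_injective (CompleteEdge (Fin n))
  have hmem : ∀ w : CompleteEdge (Fin n) → Icc (1 : ℝ) 2, toGHSpace (EdgeWeighted w) ∈ S :=
    fun w => by
      obtain ⟨e⟩ := nonempty_rep_toGHSpace_isometryEquiv (EdgeWeighted w)
      have f : (toGHSpace (EdgeWeighted w)).Rep ≃ Fin n :=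
        e.toEquiv.trans (EdgeWeighted.vertexEquiv w)
      exact hS _ (.of_equiv _ f.symm) (by rw [Nat.card_congr f, Nat.card_fin])
  let Φ (x : CompleteEdge (Fin n) → I) : S := ⟨_, hmem fun s => c s (x s)⟩
  have hΦ : Continuous Φ := ((continuous_toGHSpace_edgeWeighted (Fin n)).comp
    (continuous_pi fun s => (hc s).comp (continuous_apply s))).subtype_mk _
  have hΦinj : Function.Injective Φ := fun x y hxy =>
    eq_of_toGHSpace_edgeWeighted_eq hcinj (congrArg Subtype.val hxy)
  intro hdim
  refine not_covDimLE_cube ?_ (covDimLE_of_isClosedEmbedding (hΦ.isClosedEmbedding hΦinj) hdim)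
  rwa [card_completeEdge, Nat.card_fin]

end LowerBound

/-- The space `GH_{≤n}` of isometry classes of metric spaces with at most `n` points, with
the Gromov-Hausdorff distance, has covering dimension exactly `n(n-1)/2`. -/
theorem stmt16 (n : ℕ) (hn : 1 ≤ n) :
    covDim ↥{p : GromovHausdorff.GHSpace | Finite p.Rep ∧ Nat.card p.Rep ≤ n} =
      (↑(n * (n - 1) / 2) : ℕ∞) := by
  rw [← Nat.choose_two_right]
  exact covDim_eq_s16 (covDimLE_choose_two_of_card_rep_le fun p hp => hp) fun k hk =>
    not_covDimLE_of_lt_choose_two (fun p hfin hcard => ⟨hfin, hcard.le⟩) hk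
end
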